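/- arXiv:1812.09967 — 4 statements merged into one kernel-verified Lean document; each statement's English description precedes it below -/
import Mathlib

section
/- Let ℓ ≥ 1 and k ≥ 3^ℓ be integers and set R = kℓ + 1. Let K' = K − 𝟙πᵀ, where 𝟙πᵀ ∈ ℝ^{V×V} is the rank-one matrix whose (u,v) entry is π(v) (the projection onto the stationary distribution; the maximum-magnitude eigenvalue of K' equals that of K once the trivial eigenvalue 1 is excluded). Let ρ ≥ 0 be a real number such that the ℓ²→ℓ² operator norm of (K')^{2ℓ} is at most ρ^{2ℓ}, and define β = (k·π_*^{−1/2}/(2·k^{1/(2ℓ)}))·ρ^{2ℓ} + 2/k^{1/(2ℓ)}. Then the symmetric matrix β·Π + (1/m)·A is a 2R-local sum of PSD matrices. (Since (1/m)A = ΠK, this expresses that 2R-local degree-2 sum of squares can deduce ⟨X, KX⟩_π ≥ −β⟨X,X⟩_π, i.e. the bound λ_min(K) ≥ −β.) -/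
/-!
Write `l = n + 1`, `τ = k ^ (1 / (2 l))` (so `τ ^ 2 ≥ 3`) and `Π = diag(π)`. The scalar fact behind
the bound is the identity (`sum_sq_identity`)
`l (1 + y)² + ∑_{i < n} (n - i) (y^{i+2} - y^i)² = y^{2l} + 2l y + (2l - 1)`,
used at `y = τ K`, where `y^{2l} = k K^{2l}`.

The matrix `Π q(K)²`, for a polynomial `q` of degree at most `l`, is not local, but it can be
approximated by local squares: pick a center `u ∼ π` and, for each `1 ≤ j ≤ l`, the endpoints of
`k` independent walks of length `j` from `u`. This spider has at most `k l + 1` vertices. Replacing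
`(K^j x)(u)` in `(q(K) x)(u)` by the average of `x` over the `k` endpoints gives a random linear
form; its expected square is `Π q(K)²` plus covariance terms `c² (Π - Π K^{2j})`
(`IsReversibleChain.star_second_moment`). Adding the 2-local matrices `c² (Π + Π K^{2j})` turns the
error into `(2 / k) (∑_{j ≥ 1} q_j²) Π`. Taking two independent spiders, on at most
`2 (k l + 1)` vertices, allows one to subtract in addition any fraction `θ ∈ [0, 1]` of the square of
the mean, `q(1)² π πᵀ` (`IsReversibleChain.star_two_copies`, `IsReversibleChain.spider_isLocal`).
Choosing `θ` so that exactly `k π πᵀ` is subtracted in total, and bounding the total error by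
`2l + 1` (`noise_bound`), one finds that `k Π K^{2l} - k π πᵀ + 2lτ Π K + 4l Π` is
`2 (k l + 1)`-local (`IsReversibleChain.certificate`).

Finally `(K')^{2l} = K^{2l} - 𝟙πᵀ`, and each row of `(K')^{2l}` has `ℓ¹` norm at most
`√|V| ρ^{2l} ≤ π_*^{-1/2} ρ^{2l}`. By diagonal dominance `π_*^{-1/2} ρ^{2l} Π - Π (K')^{2l}` is
2-local. Adding `k` times this to the certificate and dividing by `2lτ` gives the theorem, up to a
nonnegative multiple of `Π` coming from `1 / l ≤ 1`.
-/

section WeightedGraph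

variable {V : Type*} [Fintype V] [DecidableEq V] [Nonempty V]

/-- The (weighted) degree `deg(u) = ∑_v A_{uv}` of a weighted graph `A`. -/
noncomputable def gdeg (A : Matrix V V ℝ) (u : V) : ℝ := ∑ v, A u v

/-- The total weight `m = ∑_u deg(u)`. -/
noncomputable def gm (A : Matrix V V ℝ) : ℝ := ∑ u, gdeg A u

/-- The stationary distribution `π(u) = deg(u)/m` of the random walk on `A`. -/
noncomputable def gpi (A : Matrix V V ℝ) (u : V) : ℝ := gdeg A u / gm A

/-- `π_* = min_u π(u)`. -/
noncomputable def gpiStar (A : Matrix V V ℝ) : ℝ :=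
  Finset.univ.inf' Finset.univ_nonempty (gpi A)

/-- The random-walk transition matrix `K = D⁻¹A`, i.e. `K_{uv} = A_{uv}/deg(u)`. -/
noncomputable def gK (A : Matrix V V ℝ) : Matrix V V ℝ :=
  Matrix.of fun u v => A u v / gdeg A u

/-- The `ℓ² → ℓ²` operator norm (spectral norm) of a real square matrix. -/
noncomputable def l2opNorm (M : Matrix V V ℝ) : ℝ :=
  ‖Matrix.toEuclideanCLM (𝕜 := ℝ) M‖

/-- A symmetric matrix `M` is an `R`-local sum of PSD matrices if it is a finite sum
`M = ∑ i, M_i` of positive semidefinite matrices, each supported on a set `S_i` of at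
most `R` rows/columns.  This is exactly derivability of `xᵀMx ≥ 0` in the `R`-local,
degree-2 static sum-of-squares proof system. -/
def IsLocalPSDSum (R : ℕ) (M : Matrix V V ℝ) : Prop :=
  ∃ (n : ℕ) (Ms : Fin n → Matrix V V ℝ) (Ss : Fin n → Finset V),
    M = ∑ i, Ms i ∧ (∀ i, (Ms i).PosSemidef) ∧ (∀ i, (Ss i).card ≤ R) ∧
    (∀ i u v, Ms i u v ≠ 0 → u ∈ Ss i ∧ v ∈ Ss i)

end WeightedGraph

/-! ### Local sums of PSD matrices -/

section Local
variable {V : Type*}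

namespace IsLocalPSDSum

lemma mono {R R' : ℕ} (h : R ≤ R') {M : Matrix V V ℝ} (hM : IsLocalPSDSum R M) :
    IsLocalPSDSum R' M := by
  obtain ⟨n, Ms, Ss, h1, h2, h3, h4⟩ := hM
  exact ⟨n, Ms, Ss, h1, h2, fun i => (h3 i).trans h, h4⟩

lemma zero (R : ℕ) : IsLocalPSDSum R (0 : Matrix V V ℝ) :=
  ⟨0, Fin.elim0, Fin.elim0, by simp, fun i => i.elim0, fun i => i.elim0, fun i => i.elim0⟩

lemma add {R : ℕ} {M N : Matrix V V ℝ} (hM : IsLocalPSDSum R M) (hN : IsLocalPSDSum R N) :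
    IsLocalPSDSum R (M + N) := by
  obtain ⟨n, Ms, Ss, h1, h2, h3, h4⟩ := hM
  obtain ⟨n', Ms', Ss', h1', h2', h3', h4'⟩ := hN
  refine ⟨n + n', Fin.append Ms Ms', Fin.append Ss Ss', ?_, ?_, ?_, ?_⟩
  · simp [Fin.sum_univ_add, h1, h1']
  all_goals
    intro i
    refine Fin.addCases (fun i => ?_) (fun i => ?_) i
  · simpa using h2 i
  · simpa using h2' i
  · simpa using h3 i
  · simpa using h3' i
  · simpa using h4 i
  · simpa using h4' i

lemma smul {R : ℕ} {M : Matrix V V ℝ} (hM : IsLocalPSDSum R M) {c : ℝ} (hc : 0 ≤ c) :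
    IsLocalPSDSum R (c • M) := by
  obtain ⟨n, Ms, Ss, h1, h2, h3, h4⟩ := hM
  refine ⟨n, fun i => c • Ms i, Ss, by rw [h1, Finset.smul_sum], fun i => (h2 i).smul hc, h3, ?_⟩
  intro i u v h
  exact h4 i u v (fun h0 => h (by simp [h0]))

lemma sum {R : ℕ} {κ : Type*} (s : Finset κ) {M : κ → Matrix V V ℝ}
    (h : ∀ i ∈ s, IsLocalPSDSum R (M i)) : IsLocalPSDSum R (∑ i ∈ s, M i) := by
  classical
  induction s using Finset.induction_on with
  | empty => simpa using zero R
  | insert a s ha ih =>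
    rw [Finset.sum_insert ha]
    exact (h a (by simp)).add (ih fun i hi => h i (by simp [hi]))

variable [Fintype V]

/-- The square of a linear form in at most `R` coordinates is `R`-local. -/
lemma vecMulVec_self {R : ℕ} (z : V → ℝ) (S : Finset V) (hS : S.card ≤ R)
    (hz : ∀ v, z v ≠ 0 → v ∈ S) : IsLocalPSDSum R (Matrix.vecMulVec z z) := by
  refine ⟨1, fun _ => Matrix.vecMulVec z z, fun _ => S, by simp, fun _ => ?_, fun _ => hS, ?_⟩
  · simpa using Matrix.posSemidef_vecMulVec_self_star z
  · intro _ u v h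
    change z u * z v ≠ 0 at h
    exact ⟨hz u (left_ne_zero_of_mul h), hz v (right_ne_zero_of_mul h)⟩

variable [DecidableEq V]

lemma diagonal {R : ℕ} (hR : 1 ≤ R) {D : V → ℝ} (hD : ∀ v, 0 ≤ D v) :
    IsLocalPSDSum R (Matrix.diagonal D) := by
  have h : Matrix.diagonal D
      = ∑ v, D v • Matrix.vecMulVec (Pi.single v (1 : ℝ)) (Pi.single v (1 : ℝ)) := by
    ext a b
    by_cases hab : a = b <;>
      simp [Matrix.sum_apply, Matrix.vecMulVec_apply, Pi.single_apply, hab]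
  rw [h]
  refine sum _ fun v _ => smul (vecMulVec_self _ {v} (by simpa using hR) ?_) (hD v)
  intro w hw
  by_contra h
  simp_all [Pi.single_apply]

/-- A diagonally dominant symmetric matrix is a sum of squares of the forms `x_a ± x_b`
and of nonnegative multiples of the `x_a ^ 2`. -/
lemma of_diag_dominant {R : ℕ} (hR : 2 ≤ R) {D : V → ℝ} {M : Matrix V V ℝ} (hM : M.IsSymm)
    (hD : ∀ a, ∑ b, |M a b| ≤ D a) : IsLocalPSDSum R (Matrix.diagonal D + M) := by
  let z : V → V → V → ℝ := fun a b =>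
    Pi.single a 1 + (SignType.sign (M a b) : ℝ) • Pi.single b 1
  have h : Matrix.diagonal D + M = Matrix.diagonal (fun a => D a - ∑ b, |M a b|)
      + ∑ a, ∑ b, (|M a b| / 2) • Matrix.vecMulVec (z a b) (z a b) := by
    have key : ∑ a, ∑ b, (|M a b| / 2) • Matrix.vecMulVec (z a b) (z a b)
        = Matrix.diagonal (fun a => ∑ b, |M a b|) + M := by
      ext i j
      have hs : ∀ a b, |M a b| * (SignType.sign (M a b) : ℝ) = M a b := fun a b => by
        rw [mul_comm]; exact sign_mul_abs _
      have hs2 : ∀ a b, |M a b| * (SignType.sign (M a b) : ℝ) * (SignType.sign (M a b) : ℝ)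
          = |M a b| := fun a b => by
        rw [hs, mul_comm]; exact sign_mul_self _
      let e : V → V → ℝ := fun a i => if i = a then 1 else 0
      have hterm : ∀ a b, (|M a b| / 2) * (z a b i * z a b j)
          = |M a b| / 2 * (e a i * e a j) + |M a b| / 2 * (e b i * e b j)
          + M a b / 2 * (e a i * e b j) + M a b / 2 * (e b i * e a j) := by
        intro a b
        simp only [z, e, Pi.add_apply, Pi.smul_apply, Pi.single_apply, smul_eq_mul]
        linear_combination (((if i = a then 1 else 0) * (if j = b then 1 else 0)
          + (if i = b then 1 else 0) * (if j = a then 1 else 0)) / 2 : ℝ) * hs a b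
          + ((if i = b then 1 else 0) * (if j = b then 1 else 0) / 2 : ℝ) * hs2 a b
      simp only [Matrix.sum_apply, Matrix.smul_apply, Matrix.vecMulVec_apply, smul_eq_mul, hterm,
        Matrix.add_apply, Matrix.diagonal_apply, Finset.sum_add_distrib]
      have hsym : ∀ a b, M a b = M b a := fun a b => (hM.apply a b).symm
      by_cases hij : i = j
      · subst hij
        simp [e, ← Finset.sum_div, Finset.sum_ite_eq, hsym _ i]
        ring
      · simp [e, hij, hsym j i]
    rw [key, ← add_assoc, Matrix.diagonal_add]
    simp
  rw [h]
  refine (diagonal (by omega) fun a => sub_nonneg.2 (hD a)).add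
    (sum _ fun a _ => sum _ fun b _ => smul (vecMulVec_self _ {a, b} ?_ ?_) (by positivity))
  · exact Finset.card_le_two.trans hR
  · intro v hv
    by_contra h
    simp_all [z, Pi.single_apply]

end IsLocalPSDSum
end Local

/-! ### Second moments of independent samples -/

section Sampling
variable {V ι : Type*} [Fintype ι]

/-- The coefficient vector of the linear form `∑ s, c s * x_{w s}`. -/
def sampleVec [DecidableEq V] (c : ι → ℝ) (w : ι → V) : V → ℝ :=
  fun a => ∑ s, c s * if w s = a then 1 else 0

lemma sampleVec_ne_zero [DecidableEq V] {c : ι → ℝ} {w : ι → V} {a : V} (h : sampleVec c w a ≠ 0) :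
    a ∈ Finset.univ.image w := by
  obtain ⟨s, -, hs⟩ := Finset.exists_ne_zero_of_sum_ne_zero h
  simp only [Finset.mem_image, Finset.mem_univ, true_and]
  refine ⟨s, ?_⟩
  by_contra h'
  simp [h'] at hs

variable [Fintype V] [DecidableEq ι]

/-- Expectation of a function of one coordinate under the product of the distributions `P s`. -/
lemma expect_one {P : ι → V → ℝ} (hP : ∀ s, ∑ v, P s v = 1) (s : ι) (f : V → ℝ) :
    ∑ w : ι → V, (∏ r, P r (w r)) * f (w s) = ∑ v, P s v * f v := by
  have h : ∀ w : ι → V, (∏ r, P r (w r)) * f (w s)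
      = ∏ r, (P r (w r) * if r = s then f (w r) else 1) := by
    intro w
    rw [Finset.prod_mul_distrib]
    simp
  simp_rw [h]
  rw [← Fintype.prod_sum (fun r v => P r v * if r = s then f v else 1),
    ← Finset.mul_prod_erase Finset.univ _ (Finset.mem_univ s), Finset.prod_eq_one]
  · simp
  · intro r hr
    simp [Finset.ne_of_mem_erase hr, hP]

/-- Distinct coordinates are independent under the product of the distributions `P s`. -/
lemma expect_two {P : ι → V → ℝ} (hP : ∀ s, ∑ v, P s v = 1) {s t : ι} (hst : s ≠ t)
    (f g : V → ℝ) :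
    ∑ w : ι → V, (∏ r, P r (w r)) * (f (w s) * g (w t))
      = (∑ v, P s v * f v) * ∑ v, P t v * g v := by
  have h : ∀ w : ι → V, (∏ r, P r (w r)) * (f (w s) * g (w t))
      = ∏ r, (P r (w r) * ((if r = s then f (w r) else 1) * if r = t then g (w r) else 1)) := by
    intro w
    rw [Finset.prod_mul_distrib, Finset.prod_mul_distrib]
    simp
  simp_rw [h]
  rw [← Fintype.prod_sum
      (fun r v => P r v * ((if r = s then f v else 1) * if r = t then g v else 1)),
    ← Finset.mul_prod_erase Finset.univ _ (Finset.mem_univ s),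
    ← Finset.mul_prod_erase (Finset.univ.erase s) _ (by simp [hst.symm] : t ∈ _),
    Finset.prod_eq_one]
  · simp [hst, hst.symm]
  · intro r hr
    simp only [Finset.mem_erase] at hr
    simp [hr.1, hr.2.1, hP]

variable [DecidableEq V]

lemma sampleVec_mean {P : ι → V → ℝ} (hP : ∀ s, ∑ v, P s v = 1) (c : ι → ℝ) (a : V) :
    ∑ w : ι → V, (∏ r, P r (w r)) * sampleVec c w a = ∑ s, c s * P s a := by
  simp only [sampleVec, Finset.mul_sum]
  rw [Finset.sum_comm]
  refine Finset.sum_congr rfl fun s _ => ?_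
  have := expect_one hP s (fun v => if v = a then (1 : ℝ) else 0)
  simp only [mul_left_comm _ (c s), ← Finset.mul_sum, this]
  simp

/-- For independent samples `w s ∼ P s` the second moment of `sampleVec c w` is the square of
its mean plus the sum of the covariances of the individual samples. -/
lemma sampleVec_second_moment {P : ι → V → ℝ} (hP : ∀ s, ∑ v, P s v = 1) (c : ι → ℝ) (a b : V) :
    ∑ w : ι → V, (∏ r, P r (w r)) * (sampleVec c w a * sampleVec c w b)
      = (∑ s, c s * P s a) * (∑ s, c s * P s b)
        + ∑ s, c s ^ 2 * ((if a = b then P s a else 0) - P s a * P s b) := by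
  have hE : ∀ s t, ∑ w : ι → V, (∏ r, P r (w r)) *
      ((if w s = a then (1 : ℝ) else 0) * if w t = b then 1 else 0)
      = P s a * P t b + if s = t then (if a = b then P s a else 0) - P s a * P s b else 0 := by
    intro s t
    by_cases hst : s = t
    · subst hst
      rw [expect_one hP s (fun v => (if v = a then (1 : ℝ) else 0) * if v = b then 1 else 0)]
      by_cases hab : a = b <;> simp [hab, eq_comm]
    · rw [expect_two hP hst (fun v => if v = a then (1 : ℝ) else 0)
        (fun v => if v = b then (1 : ℝ) else 0)]
      simp [hst]
  have hexp : ∀ w : ι → V, (∏ r, P r (w r)) * (sampleVec c w a * sampleVec c w b)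
      = ∑ s, ∑ t, c s * c t * ((∏ r, P r (w r)) *
        ((if w s = a then (1 : ℝ) else 0) * if w t = b then 1 else 0)) := by
    intro w
    simp only [sampleVec]
    rw [Finset.sum_mul_sum, Finset.mul_sum]
    refine Finset.sum_congr rfl fun s _ => ?_
    rw [Finset.mul_sum]
    exact Finset.sum_congr rfl fun t _ => by ring
  simp_rw [hexp]
  rw [Finset.sum_comm]
  simp_rw [Finset.sum_comm (s := (Finset.univ : Finset (ι → V))), ← Finset.mul_sum, hE, mul_add,
    Finset.sum_add_distrib]
  rw [Finset.sum_mul_sum]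
  congr 1
  · exact Finset.sum_congr rfl fun s _ => Finset.sum_congr rfl fun t _ => by ring
  · exact Finset.sum_congr rfl fun s _ => by simp; ring_nf; simp

end Sampling

/-! ### Reversible chains and spiders -/

section Chain
variable {V : Type*} [Fintype V]

/-- `K` is a row-stochastic matrix which is reversible with respect to the probability
vector `π`. -/
structure IsReversibleChain (K : Matrix V V ℝ) (π : V → ℝ) : Prop where
  nonneg : ∀ a b, 0 ≤ K a b
  row_sum : ∀ a, ∑ b, K a b = 1
  pi_nonneg : ∀ a, 0 ≤ π a
  pi_sum : ∑ a, π a = 1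
  rev : ∀ a b, π a * K a b = π b * K b a

namespace IsReversibleChain
variable {K : Matrix V V ℝ} {π : V → ℝ}

lemma stationary (h : IsReversibleChain K π) (a : V) : ∑ u, π u * K u a = π a := by
  simp_rw [fun u => h.rev u a, ← Finset.mul_sum, h.row_sum, mul_one]

variable [DecidableEq V]

lemma pow (h : IsReversibleChain K π) (d : ℕ) : IsReversibleChain (K ^ d) π := by
  induction d with
  | zero =>
    refine ⟨fun a b => ?_, fun a => ?_, h.pi_nonneg, h.pi_sum, fun a b => ?_⟩
    · rw [pow_zero, Matrix.one_apply]; split_ifs <;> norm_num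
    · simp [Matrix.one_apply]
    · by_cases hab : a = b
      · rw [hab]
      · simp [hab, Ne.symm hab]
  | succ d ih =>
    refine ⟨fun a b => ?_, fun a => ?_, h.pi_nonneg, h.pi_sum, fun a b => ?_⟩
    · rw [pow_succ, Matrix.mul_apply]
      exact Finset.sum_nonneg fun c _ => mul_nonneg (ih.nonneg _ _) (h.nonneg _ _)
    · simp_rw [pow_succ, Matrix.mul_apply]
      rw [Finset.sum_comm]
      simp_rw [← Finset.mul_sum, h.row_sum, mul_one, ih.row_sum]
    · rw [pow_succ, Matrix.mul_apply, ← pow_succ, pow_succ', Matrix.mul_apply, Finset.mul_sum,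
        Finset.mul_sum]
      refine Finset.sum_congr rfl fun c _ => ?_
      rw [← mul_assoc, ih.rev, mul_right_comm, h.rev]
      ring

/-- `(ΠQ²)_{ab} = ∑_u π(u) Q_{ua} Q_{ub}` for `Q` self-adjoint in `ℓ²(π)`. -/
lemma diagonal_mul_sq {Q : Matrix V V ℝ} (hQ : ∀ a b, π a * Q a b = π b * Q b a) (a b : V) :
    (Matrix.diagonal π * (Q * Q)) a b = ∑ u, π u * (Q u a * Q u b) := by
  rw [Matrix.diagonal_mul, Matrix.mul_apply, Finset.mul_sum]
  refine Finset.sum_congr rfl fun u _ => ?_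
  rw [← mul_assoc, hQ, mul_assoc]

/-- `⟨x, (I + K)x⟩_π ≥ 0` has a 2-local proof. -/
lemma isLocal_one_add (h : IsReversibleChain K π) {R : ℕ} (hR : 2 ≤ R) :
    IsLocalPSDSum R (Matrix.diagonal π + Matrix.diagonal π * K) := by
  refine IsLocalPSDSum.of_diag_dominant hR ?_ fun a => ?_
  · ext a b
    simp [Matrix.diagonal_mul, h.rev]
  · simp_rw [Matrix.diagonal_mul, abs_of_nonneg (mul_nonneg (h.pi_nonneg _) (h.nonneg _ _))]
    rw [← Finset.mul_sum, h.row_sum, mul_one]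

variable {ι : Type*} [Fintype ι]

/-- The probability of a center `ω.1 ∼ π` together with independent random walks of lengths
`d s` from the center, ending at `ω.2 s`. -/
def starWeight (K : Matrix V V ℝ) (π : V → ℝ) (d : ι → ℕ) (ω : V × (ι → V)) : ℝ :=
  π ω.1 * ∏ s, (K ^ d s) ω.1 (ω.2 s)

lemma starWeight_nonneg (h : IsReversibleChain K π) (d : ι → ℕ) (ω : V × (ι → V)) :
    0 ≤ starWeight K π d ω :=
  mul_nonneg (h.pi_nonneg _) (Finset.prod_nonneg fun _ _ => (h.pow _).nonneg _ _)

variable [DecidableEq ι]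

lemma sum_starWeight (h : IsReversibleChain K π) (d : ι → ℕ) :
    ∑ ω, starWeight K π d ω = 1 := by
  simp_rw [Fintype.sum_prod_type, starWeight, ← Finset.mul_sum]
  rw [← h.pi_sum]
  refine Finset.sum_congr rfl fun u _ => ?_
  rw [← Fintype.prod_sum (fun s v => (K ^ d s) u v)]
  simp [(h.pow _).row_sum]

lemma star_mean (h : IsReversibleChain K π) (d : ι → ℕ) (c : ι → ℝ) :
    ∑ ω, starWeight K π d ω • sampleVec c ω.2 = (∑ s, c s) • π := by
  ext a
  simp only [Finset.sum_apply, Pi.smul_apply, smul_eq_mul, Fintype.sum_prod_type, starWeight,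
    mul_assoc]
  simp_rw [← Finset.mul_sum]
  simp_rw [fun u => sampleVec_mean (P := fun s => (K ^ d s) u) (fun s => (h.pow _).row_sum u) c a,
    Finset.mul_sum]
  rw [Finset.sum_comm, Finset.sum_mul]
  refine Finset.sum_congr rfl fun s _ => ?_
  simp_rw [mul_left_comm _ (c s), ← Finset.mul_sum, (h.pow _).stationary]

lemma star_second_moment (h : IsReversibleChain K π) (d : ι → ℕ) (c : ι → ℝ) :
    ∑ ω, starWeight K π d ω • Matrix.vecMulVec (sampleVec c ω.2) (sampleVec c ω.2)
      = Matrix.diagonal π * ((∑ s, c s • K ^ d s) * (∑ s, c s • K ^ d s))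
        + ∑ s, c s ^ 2 • (Matrix.diagonal π - Matrix.diagonal π * (K ^ d s * K ^ d s)) := by
  ext a b
  have hQ : ∀ a b, π a * (∑ s, c s • K ^ d s) a b = π b * (∑ s, c s • K ^ d s) b a := by
    intro a b
    simp only [Matrix.sum_apply, Matrix.smul_apply, smul_eq_mul, Finset.mul_sum]
    refine Finset.sum_congr rfl fun s _ => ?_
    rw [mul_left_comm, (h.pow _).rev, mul_left_comm]
  simp only [Matrix.add_apply, Matrix.sum_apply, Matrix.smul_apply, Matrix.sub_apply, smul_eq_mul,
    diagonal_mul_sq hQ, diagonal_mul_sq (h.pow _).rev, Matrix.vecMulVec_apply,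
    Fintype.sum_prod_type, starWeight, mul_assoc]
  simp_rw [← Finset.mul_sum]
  simp_rw [fun u => sampleVec_second_moment (P := fun s => (K ^ d s) u)
    (fun s => (h.pow _).row_sum u) c a b, mul_add, Finset.sum_add_distrib]
  congr 1
  simp_rw [Finset.mul_sum]
  rw [Finset.sum_comm]
  refine Finset.sum_congr rfl fun s _ => ?_
  simp_rw [mul_left_comm _ (c s ^ 2), ← Finset.mul_sum, mul_sub, Finset.sum_sub_distrib]
  by_cases hab : a = b
  · simp [hab, (h.pow _).stationary, mul_sub]
  · simp [hab]

/-- The two-copy argument: with `z`, `z'` the sample vectors of two independent stars,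
`(1 - θ) E[z zᵀ] + (θ/2) E[(z - z')(z - z')ᵀ] = E[z zᵀ] - θ E[z] E[z]ᵀ`. -/
lemma star_two_copies (h : IsReversibleChain K π) (d : ι → ℕ) (c : ι → ℝ) {R : ℕ}
    (hR : Fintype.card ι ≤ R) {θ : ℝ} (h0 : 0 ≤ θ) (h1 : θ ≤ 1) :
    IsLocalPSDSum (2 * R)
      (∑ ω, starWeight K π d ω • Matrix.vecMulVec (sampleVec c ω.2) (sampleVec c ω.2)
        - (θ * (∑ s, c s) ^ 2) • Matrix.vecMulVec π π) := by
  set p := starWeight K π d with hp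
  set z : V × (ι → V) → V → ℝ := fun ω => sampleVec c ω.2 with hz
  have hcard : ∀ ω : V × (ι → V), (Finset.univ.image ω.2).card ≤ R := fun ω =>
    Finset.card_image_le.trans hR
  have key : ∑ ω, p ω • Matrix.vecMulVec (z ω) (z ω)
        - (θ * (∑ s, c s) ^ 2) • Matrix.vecMulVec π π
      = (1 - θ) • ∑ ω, p ω • Matrix.vecMulVec (z ω) (z ω)
        + (θ / 2) • ∑ ω, ∑ ω', (p ω * p ω') • Matrix.vecMulVec (z ω - z ω') (z ω - z ω') := by
    ext a b
    have hm : ∀ a, ∑ ω, p ω * z ω a = (∑ s, c s) * π a := fun a => by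
      have := congrFun (h.star_mean d c) a
      simpa using this
    have hone : ∑ ω, p ω = 1 := h.sum_starWeight d
    simp only [Matrix.add_apply, Matrix.sum_apply, Matrix.smul_apply, Matrix.sub_apply,
      smul_eq_mul, Matrix.vecMulVec_apply, Pi.sub_apply]
    have hexp : ∑ ω, ∑ ω', p ω * p ω' * ((z ω a - z ω' a) * (z ω b - z ω' b))
        = 2 * (∑ ω, p ω * (z ω a * z ω b)) * (∑ ω, p ω)
          - 2 * ((∑ ω, p ω * z ω a) * (∑ ω, p ω * z ω b)) := by
      have e1 : ∀ ω ω', p ω * p ω' * ((z ω a - z ω' a) * (z ω b - z ω' b))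
          = p ω * (z ω a * z ω b) * p ω' + p ω * (p ω' * (z ω' a * z ω' b))
            - (p ω * z ω a) * (p ω' * z ω' b) - (p ω * z ω b) * (p ω' * z ω' a) := by
        intro ω ω'; ring
      simp_rw [e1, Finset.sum_sub_distrib, Finset.sum_add_distrib, ← Finset.sum_mul_sum]
      ring
    rw [hexp, hm, hm, hone]
    ring
  rw [key]
  refine (IsLocalPSDSum.smul (IsLocalPSDSum.sum _ fun ω _ => ?_) (by linarith)).add
    (IsLocalPSDSum.smul (IsLocalPSDSum.sum _ fun ω _ => IsLocalPSDSum.sum _ fun ω' _ => ?_)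
      (by linarith))
  · exact IsLocalPSDSum.smul (IsLocalPSDSum.vecMulVec_self _ (Finset.univ.image ω.2)
      ((hcard ω).trans (by omega)) fun v => sampleVec_ne_zero) (h.starWeight_nonneg d ω)
  · refine IsLocalPSDSum.smul (IsLocalPSDSum.vecMulVec_self _
      (Finset.univ.image ω.2 ∪ Finset.univ.image ω'.2) ?_ fun v hv => ?_)
      (mul_nonneg (h.starWeight_nonneg d ω) (h.starWeight_nonneg d ω'))
    · have := Finset.card_union_le (Finset.univ.image ω.2) (Finset.univ.image ω'.2)
      have := hcard ω
      have := hcard ω'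
      omega
    · rw [Finset.mem_union]
      by_contra! hcon
      have e1 : z ω v = 0 := by_contra fun h => hcon.1 (sampleVec_ne_zero h)
      have e2 : z ω' v = 0 := by_contra fun h => hcon.2 (sampleVec_ne_zero h)
      simp [e1, e2] at hv

/-- The square of `Q = ∑ s, c s • K ^ d s` is locally nonnegative up to the sampling error
`2 ∑ c s ^ 2`, to which the samples equal to the center (`d s = 0`) do not contribute. -/
lemma star_isLocal (h : IsReversibleChain K π) (d : ι → ℕ) (c : ι → ℝ) {R : ℕ} (hR1 : 1 ≤ R)
    (hR : Fintype.card ι ≤ R) {θ : ℝ} (h0 : 0 ≤ θ) (h1 : θ ≤ 1) :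
    IsLocalPSDSum (2 * R)
      (Matrix.diagonal π * ((∑ s, c s • K ^ d s) * (∑ s, c s • K ^ d s))
        + (∑ s, if d s = 0 then 0 else 2 * c s ^ 2) • Matrix.diagonal π
        - (θ * (∑ s, c s) ^ 2) • Matrix.vecMulVec π π) := by
  have hA := h.star_two_copies d c hR h0 h1
  rw [h.star_second_moment d c] at hA
  have hB : IsLocalPSDSum (2 * R) (∑ s, if d s = 0 then 0 else
      c s ^ 2 • (Matrix.diagonal π + Matrix.diagonal π * (K ^ d s * K ^ d s))) := by
    refine IsLocalPSDSum.sum _ fun s _ => ?_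
    split_ifs
    · exact IsLocalPSDSum.zero _
    · rw [← pow_add]
      exact ((h.pow _).isLocal_one_add (by omega)).smul (sq_nonneg _)
  convert hA.add hB using 1
  have : (∑ s, if d s = 0 then 0 else 2 * c s ^ 2) • Matrix.diagonal π
      = ∑ s, c s ^ 2 • (Matrix.diagonal π - Matrix.diagonal π * (K ^ d s * K ^ d s))
        + ∑ s, if d s = 0 then 0 else
      c s ^ 2 • (Matrix.diagonal π + Matrix.diagonal π * (K ^ d s * K ^ d s)) := by
    rw [← Finset.sum_add_distrib, Finset.sum_smul]
    refine Finset.sum_congr rfl fun s _ => ?_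
    split_ifs with hd
    · simp [hd]
    · module
  rw [this]
  abel

open Polynomial in
/-- `star_isLocal` for the spider with `k` independent walks of each length `1 ≤ j ≤ l`: `K ^ j` is
estimated by the average over the `k` endpoints, the constant term by the center itself. -/
lemma spider_isLocal (h : IsReversibleChain K π) {k l : ℕ} (hk : 0 < k) (q : ℝ[X])
    (hq : q.natDegree ≤ l) {θ : ℝ} (h0 : 0 ≤ θ) (h1 : θ ≤ 1) :
    IsLocalPSDSum (2 * (k * l + 1))
      (Matrix.diagonal π * aeval K (q ^ 2)
        + (2 / k * ∑ j ∈ Finset.range l, q.coeff (j + 1) ^ 2) • Matrix.diagonal π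
        - (θ * q.eval 1 ^ 2) • Matrix.vecMulVec π π) := by
  have hk' : (k : ℝ) ≠ 0 := by positivity
  let d : Option (Fin k × Fin l) → ℕ := fun s => s.elim 0 fun x => x.2 + 1
  let c : Option (Fin k × Fin l) → ℝ := fun s => s.elim (q.coeff 0) fun x => q.coeff (x.2 + 1) / k
  have hQ : ∑ s, c s • K ^ d s = aeval K q := by
    rw [aeval_eq_sum_range' (Nat.lt_succ_of_le hq), Finset.sum_range_succ', Fintype.sum_option,
      add_comm]
    simp only [c, d, Option.elim, Fintype.sum_prod_type, Finset.sum_const, Finset.card_univ,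
      Fintype.card_fin]
    rw [Finset.sum_range, ← Nat.cast_smul_eq_nsmul ℝ, Finset.smul_sum]
    congr 1
    refine Finset.sum_congr rfl fun j _ => ?_
    rw [smul_smul, mul_div_cancel₀ _ hk']
  have hc : ∑ s, c s = q.eval 1 := by
    rw [eval_eq_sum_range' (Nat.lt_succ_of_le hq), Finset.sum_range_succ', Fintype.sum_option,
      add_comm]
    simp only [c, Option.elim, Fintype.sum_prod_type, Finset.sum_const, Finset.card_univ,
      Fintype.card_fin, one_pow, mul_one, nsmul_eq_mul]
    rw [Finset.sum_range, ← Finset.sum_div, mul_div_cancel₀ _ hk']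
  have hn : (∑ s, if d s = 0 then 0 else 2 * c s ^ 2)
      = 2 / k * ∑ j ∈ Finset.range l, q.coeff (j + 1) ^ 2 := by
    rw [Fintype.sum_option, Finset.sum_range]
    simp only [c, d, Option.elim, Fintype.sum_prod_type, Finset.sum_const, Finset.card_univ,
      Fintype.card_fin, nsmul_eq_mul, if_true, zero_add, Nat.succ_ne_zero, if_false,
      Finset.mul_sum]
    refine Finset.sum_congr rfl fun j _ => ?_
    field_simp
  have := h.star_isLocal d c (R := k * l + 1) (by omega) (by simp) h0 h1
  rwa [hQ, hc, hn, ← pow_two, ← map_pow] at this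

end IsReversibleChain
end Chain

/-! ### The scalar identity and the sampling error -/

section Certificate

/-- Writes `y ^ (2l) + 2l y + (2l - 1)`, with `l = n + 1`, as a nonnegative combination of squares
of polynomials of degree at most `l`. -/
lemma sum_sq_identity {S : Type*} [CommRing S] (y : S) (n : ℕ) :
    (n + 1) * (1 + y) ^ 2 + ∑ i ∈ Finset.range n, ((n : S) - i) * (y ^ (i + 2) - y ^ i) ^ 2
      = y ^ (2 * (n + 1)) + 2 * (n + 1) * y + (2 * n + 1) := by
  have hgeom : ∀ n : ℕ, ∑ i ∈ Finset.range (n + 1), (y ^ (i + 2) - y ^ i) ^ 2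
      = (y ^ 2 - 1) * (y ^ (2 * (n + 1)) - 1) := by
    intro n
    induction n with
    | zero => simp; ring
    | succ n ih => rw [Finset.sum_range_succ, ih]; ring
  induction n with
  | zero => simp; ring
  | succ n ih =>
    have hstep : ∑ i ∈ Finset.range (n + 1), (((n + 1 : ℕ) : S) - i) * (y ^ (i + 2) - y ^ i) ^ 2
        = ∑ i ∈ Finset.range n, ((n : S) - i) * (y ^ (i + 2) - y ^ i) ^ 2
          + (y ^ 2 - 1) * (y ^ (2 * (n + 1)) - 1) := by
      rw [← hgeom n, Finset.sum_range_succ, Finset.sum_range_succ _ n, ← add_assoc,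
        ← Finset.sum_add_distrib]
      congr 1
      · exact Finset.sum_congr rfl fun i _ => by push_cast; ring
      · push_cast; ring
    rw [hstep]
    push_cast
    linear_combination ih

/-- The sampling error of the certificate, cleared of denominators. -/
lemma noise_bound {t : ℝ} (ht : 3 ≤ t) (n : ℕ) :
    2 * ((n + 1) * t + ∑ i ∈ Finset.range n, ((n : ℝ) - i) * (t ^ (i + 2) + t ^ i))
      ≤ (2 * n + 3) * t ^ (n + 1) := by
  have hquad : t ^ 2 + 1 ≤ 5 / 3 * (t ^ 2 - t) := by nlinarith
  have hgeom : ∀ n : ℕ, ∑ i ∈ Finset.range (n + 1), (t ^ (i + 2) + t ^ i)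
      ≤ 5 / 3 * t ^ (n + 2) := by
    intro n
    induction n with
    | zero => simp; nlinarith
    | succ n ih =>
      rw [Finset.sum_range_succ]
      have : t ^ (n + 1) * (t ^ 2 + 1) ≤ t ^ (n + 1) * (5 / 3 * (t ^ 2 - t)) :=
        mul_le_mul_of_nonneg_left hquad (by positivity)
      calc _ ≤ 5 / 3 * t ^ (n + 2) + t ^ (n + 1) * (t ^ 2 + 1) := by
            rw [add_assoc] at *; apply add_le_add ih; apply le_of_eq; ring
        _ ≤ 5 / 3 * t ^ (n + 2) + t ^ (n + 1) * (5 / 3 * (t ^ 2 - t)) := by linarith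
        _ = _ := by ring
  induction n with
  | zero => simp; linarith
  | succ n ih =>
    have hstep : ∑ i ∈ Finset.range (n + 1), (((n + 1 : ℕ) : ℝ) - i) * (t ^ (i + 2) + t ^ i)
        = ∑ i ∈ Finset.range n, ((n : ℝ) - i) * (t ^ (i + 2) + t ^ i)
          + ∑ i ∈ Finset.range (n + 1), (t ^ (i + 2) + t ^ i) := by
      rw [Finset.sum_range_succ, Finset.sum_range_succ _ n, ← add_assoc,
        ← Finset.sum_add_distrib]
      congr 1
      · exact Finset.sum_congr rfl fun i _ => by push_cast; ring
      · push_cast; ring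
    rw [hstep]
    have h1 := hgeom n
    have h2 : t ^ (n + 1) * 3 ≤ t ^ (n + 2) := by
      rw [pow_succ t (n + 1)]; exact mul_le_mul_of_nonneg_left ht (by positivity)
    have h3 : 3 * t ≤ t ^ (n + 2) := by
      have : t ≤ t ^ (n + 1) := le_self_pow₀ (by linarith) (by omega)
      linarith
    have h4 : (2 * n + 3) * (t ^ (n + 1) * 3) ≤ (2 * (n : ℝ) + 3) * t ^ (n + 2) :=
      mul_le_mul_of_nonneg_left h2 (by positivity)
    have h5 : 0 ≤ (n : ℝ) * t ^ (n + 2) := by positivity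
    push_cast
    rw [show n + 1 + 1 = n + 2 from rfl]
    linarith

end Certificate

/-! ### The random walk on a weighted graph -/

section RandomWalk
variable {V : Type*} [Fintype V] [Nonempty V] {A : Matrix V V ℝ}

lemma gm_pos (hrow : ∀ u, 0 < ∑ v, A u v) : 0 < gm A :=
  Finset.sum_pos (fun u _ => hrow u) Finset.univ_nonempty

lemma gpi_pos (hrow : ∀ u, 0 < ∑ v, A u v) (u : V) : 0 < gpi A u :=
  div_pos (hrow u) (gm_pos hrow)

lemma randomWalk_isReversibleChain (hA : A.IsSymm) (hA0 : ∀ u v, 0 ≤ A u v)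
    (hrow : ∀ u, 0 < ∑ v, A u v) : IsReversibleChain (gK A) (gpi A) where
  nonneg a b := div_nonneg (hA0 a b) (hrow a).le
  row_sum a := by
    simp only [gK, Matrix.of_apply, ← Finset.sum_div]
    exact div_self (hrow a).ne'
  pi_nonneg a := (gpi_pos hrow a).le
  pi_sum := by
    simp only [gpi, ← Finset.sum_div]
    exact div_self (gm_pos hrow).ne'
  rev a b := by
    have ha : gdeg A a ≠ 0 := (hrow a).ne'
    have hb : gdeg A b ≠ 0 := (hrow b).ne'
    have := hA.apply a b
    simp only [gK, Matrix.of_apply, gpi]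
    rw [this]
    field_simp

/-- A restatement of `|V| π_* ≤ 1`. -/
lemma sqrt_card_le (hrow : ∀ u, 0 < ∑ v, A u v) :
    √(Fintype.card V) ≤ (√(gpiStar A))⁻¹ := by
  have hpos : 0 < gpiStar A := by
    rw [gpiStar, Finset.lt_inf'_iff]
    exact fun u _ => gpi_pos hrow u
  have hsum : ∑ u, gpi A u = 1 := by
    simp only [gpi, ← Finset.sum_div]
    exact div_self (gm_pos hrow).ne'
  have hle : (Fintype.card V : ℝ) * gpiStar A ≤ 1 := by
    rw [← hsum, ← nsmul_eq_mul]
    exact Finset.card_nsmul_le_sum _ _ _ fun u hu => Finset.inf'_le _ hu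
  rw [← Real.sqrt_inv]
  refine Real.sqrt_le_sqrt ?_
  rw [← one_div, le_div_iff₀ hpos]
  exact hle

end RandomWalk

/-! ### The spider certificate and the remainder -/

section Bounds
variable {V : Type*} [Fintype V] [DecidableEq V]

open Polynomial in
/-- The spider certificate for `k K^{2l} - k 𝟙πᵀ + 2lτ K + 4l`, where `l = n + 1`. -/
lemma IsReversibleChain.certificate {K : Matrix V V ℝ} {π : V → ℝ} (h : IsReversibleChain K π)
    {k n : ℕ} {τ : ℝ} (hτ : 0 < τ) (ht : 3 ≤ τ ^ 2) (hk : τ ^ (2 * (n + 1)) = k) :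
    IsLocalPSDSum (2 * (k * (n + 1) + 1))
      ((k : ℝ) • (Matrix.diagonal π * K ^ (2 * (n + 1))) - (k : ℝ) • Matrix.vecMulVec π π
        + (2 * (n + 1) * τ) • (Matrix.diagonal π * K)
        + (4 * ((n : ℝ) + 1)) • Matrix.diagonal π) := by
  have hk0 : (0 : ℝ) < k := by rw [← hk]; positivity
  have hkn : 0 < k := by exact_mod_cast hk0
  let Y : ℝ[X] := C τ * X
  let q : ℕ → ℝ[X] := fun i => Y ^ (i + 2) - Y ^ i
  have hY : ∀ i, Y ^ i = C (τ ^ i) * X ^ i := fun i => by simp [Y, mul_pow]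
  -- `θ` is chosen so that the multiples of `ππᵀ` add up to `k`.
  set T : ℝ := k + 2 * (n + 1) * τ + (2 * n + 1) with hT
  have hTpos : 0 < T := by positivity
  set θ : ℝ := k / T with hθ
  have h0 : 0 ≤ θ := by positivity
  have h1 : θ ≤ 1 := by
    rw [hθ, div_le_one hTpos, hT]
    have : 0 ≤ 2 * ((n : ℝ) + 1) * τ + (2 * n + 1) := by positivity
    linarith
  let ν : ℝ[X] → ℝ := fun p => 2 / k * ∑ j ∈ Finset.range (n + 1), p.coeff (j + 1) ^ 2
  let L : ℝ[X] → Matrix V V ℝ := fun p => Matrix.diagonal π * aeval K (p ^ 2)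
        + ν p • Matrix.diagonal π - (θ * p.eval 1 ^ 2) • Matrix.vecMulVec π π
  have hq0 : IsLocalPSDSum (2 * (k * (n + 1) + 1)) (L (1 + Y)) := by
    refine h.spider_isLocal hkn _ ?_ h0 h1
    have : (1 + Y).natDegree ≤ 1 := by simp only [Y]; compute_degree
    omega
  have hqi : ∀ i ∈ Finset.range n, IsLocalPSDSum (2 * (k * (n + 1) + 1)) (L (q i)) := by
    intro i hi
    refine h.spider_isLocal hkn _ ?_ h0 h1
    have hi := Finset.mem_range.1 hi
    have : (q i).natDegree ≤ i + 2 := by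
      simp only [q, hY]
      compute_degree
    omega
  set N : ℝ := (n + 1) * ν (1 + Y) + ∑ i ∈ Finset.range n, ((n : ℝ) - i) * ν (q i) with hN
  have hNle : N ≤ 2 * n + 3 := by
    have e0 : ν (1 + Y) = 2 / k * τ ^ 2 := by
      simp only [ν, Y]
      congr 1
      rw [Finset.sum_eq_single 0]
      · simp [coeff_one]
      · intro j _ hj
        simp [coeff_one, coeff_C, hj]
      · simp
    have ei : ∀ i ∈ Finset.range n,
        ((n : ℝ) - i) * ν (q i) ≤ 2 / k * (((n : ℝ) - i) * ((τ ^ 2) ^ (i + 2) + (τ ^ 2) ^ i)) := by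
      intro i hi
      have hin : (i : ℝ) ≤ n := by exact_mod_cast (Finset.mem_range.1 hi).le
      have hs : ∑ j ∈ Finset.range (n + 1), (q i).coeff (j + 1) ^ 2
          ≤ (τ ^ 2) ^ (i + 2) + (τ ^ 2) ^ i := by
        have e : ∀ j, (q i).coeff (j + 1) ^ 2 = (if i + 1 = j then (τ ^ 2) ^ (i + 2) else 0)
            + (if i = j + 1 then (τ ^ 2) ^ i else 0) := by
          intro j
          simp only [q, hY, coeff_sub, coeff_C_mul, coeff_X_pow]
          by_cases ha : i + 1 = j
          · subst ha
            have h2 : i + 1 + 1 ≠ i := by omega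
            simp [h2, Ne.symm h2]
            ring
          · by_cases hb : i = j + 1
            · subst hb
              simp [ha]
              ring
            · rw [if_neg ha, if_neg hb, if_neg (by omega), if_neg (Ne.symm hb)]
              ring
        simp_rw [e, Finset.sum_add_distrib]
        refine add_le_add ?_ ?_
        · rw [Finset.sum_ite_eq]
          split_ifs
          · exact le_rfl
          · positivity
        · rcases i with _ | i
          · simp
          · simp only [Nat.add_right_cancel_iff]
            rw [Finset.sum_ite_eq]
            split_ifs
            · exact le_rfl
            · positivity
      calc ((n : ℝ) - i) * ν (q i)
          = (2 / k * ((n : ℝ) - i)) * ∑ j ∈ Finset.range (n + 1), (q i).coeff (j + 1) ^ 2 := by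
            simp only [ν]; ring
        _ ≤ (2 / k * ((n : ℝ) - i)) * ((τ ^ 2) ^ (i + 2) + (τ ^ 2) ^ i) :=
            mul_le_mul_of_nonneg_left hs (mul_nonneg (by positivity) (by linarith))
        _ = _ := by ring
    have hb := noise_bound ht n
    rw [← pow_mul, hk] at hb
    calc N ≤ (n + 1) * (2 / k * τ ^ 2) + ∑ i ∈ Finset.range n,
          2 / k * (((n : ℝ) - i) * ((τ ^ 2) ^ (i + 2) + (τ ^ 2) ^ i)) := by
          rw [hN, e0]
          exact add_le_add le_rfl (Finset.sum_le_sum ei)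
      _ = 2 * ((n + 1) * τ ^ 2 + ∑ i ∈ Finset.range n,
          (((n : ℝ) - i) * ((τ ^ 2) ^ (i + 2) + (τ ^ 2) ^ i))) / k := by
          rw [← Finset.mul_sum]; ring
      _ ≤ 2 * n + 3 := by rw [div_le_iff₀ hk0]; exact hb
  have hpoly : ((n : ℝ) + 1) • (1 + Y) ^ 2 + ∑ i ∈ Finset.range n, ((n : ℝ) - i) • q i ^ 2
      = C (k : ℝ) * X ^ (2 * (n + 1)) + C (2 * (n + 1) * τ) * X + C (2 * n + 1 : ℝ) := by
    have := sum_sq_identity Y n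
    rw [hY, hk] at this
    simp only [smul_eq_C_mul, q]
    simp only [C_add, C_sub, C_mul, map_natCast, C_1, map_ofNat] at this ⊢
    rw [this]
    simp only [Y]
    ring
  have haeval : ((n : ℝ) + 1) • aeval K ((1 + Y) ^ 2)
        + ∑ i ∈ Finset.range n, ((n : ℝ) - i) • aeval K (q i ^ 2)
      = (k : ℝ) • K ^ (2 * (n + 1)) + (2 * (n + 1) * τ) • K + (2 * n + 1 : ℝ) • 1 := by
    have := congrArg (aeval K) hpoly
    simp only [map_add (aeval K), map_sum, map_smul, ← smul_eq_C_mul, aeval_X, map_pow (aeval K),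
      aeval_C, Algebra.algebraMap_eq_smul_one] at this
    simp only [map_add (aeval K), map_pow (aeval K)]
    exact this
  have heval : ((n : ℝ) + 1) * (1 + Y).eval 1 ^ 2
        + ∑ i ∈ Finset.range n, ((n : ℝ) - i) * (q i).eval 1 ^ 2 = T := by
    have := congrArg (eval 1) hpoly
    simp only [eval_add, eval_finsetSum, eval_smul, eval_pow, eval_mul, eval_C, eval_X, one_pow,
      mul_one, smul_eq_mul] at this
    rw [hT, ← this]
    simp
  have hsum := ((hq0.smul (c := (n : ℝ) + 1) (by positivity)).add
    (IsLocalPSDSum.sum _ fun i hi => (hqi i hi).smul (c := (n : ℝ) - i)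
      (by have : (i : ℝ) ≤ n := by exact_mod_cast (Finset.mem_range.1 hi).le
          linarith))).add
    ((IsLocalPSDSum.diagonal (D := π) (R := 2 * (k * (n + 1) + 1)) (by omega) h.pi_nonneg).smul
      (c := 2 * n + 3 - N) (by linarith))
  convert hsum using 1
  have hθT : θ * T = k := by rw [hθ]; field_simp
  have hLsum : ((n : ℝ) + 1) • L (1 + Y) + ∑ i ∈ Finset.range n, ((n : ℝ) - i) • L (q i)
      = Matrix.diagonal π * (((n : ℝ) + 1) • aeval K ((1 + Y) ^ 2)
        + ∑ i ∈ Finset.range n, ((n : ℝ) - i) • aeval K (q i ^ 2)) + N • Matrix.diagonal π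
        - (θ * (((n : ℝ) + 1) * (1 + Y).eval 1 ^ 2
        + ∑ i ∈ Finset.range n, ((n : ℝ) - i) * (q i).eval 1 ^ 2)) • Matrix.vecMulVec π π := by
    simp only [L, hN, smul_sub, smul_add, Finset.sum_sub_distrib, Finset.sum_add_distrib, mul_add,
      add_smul, Finset.sum_smul, Finset.mul_sum, smul_smul, Matrix.mul_smul, mul_left_comm θ]
    abel
  rw [hLsum, haeval, heval, hθT]
  simp only [mul_add, Matrix.mul_smul, mul_one]
  module

/-- Testing the operator norm on the sign vector of a row bounds the `ℓ¹` norm of that row. -/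
lemma row_abs_sum_le [Nonempty V] (M : Matrix V V ℝ) (a : V) :
    ∑ b, |M a b| ≤ l2opNorm M * √(Fintype.card V) := by
  let s : EuclideanSpace ℝ V := WithLp.toLp 2 fun b => (SignType.sign (M a b) : ℝ)
  have hs : ‖s‖ ≤ √(Fintype.card V) := by
    rw [EuclideanSpace.norm_eq]
    refine Real.sqrt_le_sqrt ?_
    calc ∑ b, ‖s b‖ ^ 2 ≤ ∑ _b : V, (1 : ℝ) := by
          refine Finset.sum_le_sum fun b _ => ?_
          rcases lt_trichotomy (M a b) 0 with h | h | h <;> simp [s, h]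
      _ = _ := by simp
  have happ : (Matrix.toEuclideanCLM (𝕜 := ℝ) M s) a = ∑ b, |M a b| := by
    simp only [s, Matrix.toEuclideanCLM_toLp, Matrix.mulVec, dotProduct]
    exact Finset.sum_congr rfl fun b _ => by rw [mul_comm]; exact sign_mul_self _
  calc ∑ b, |M a b| ≤ ‖(Matrix.toEuclideanCLM (𝕜 := ℝ) M s) a‖ := by
        rw [happ]; exact le_abs_self _
    _ ≤ ‖Matrix.toEuclideanCLM (𝕜 := ℝ) M s‖ := PiLp.norm_apply_le _ a
    _ ≤ l2opNorm M * ‖s‖ := ContinuousLinearMap.le_opNorm _ _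
    _ ≤ _ := mul_le_mul_of_nonneg_left hs (norm_nonneg _)

lemma IsReversibleChain.sub_stationary_pow {K : Matrix V V ℝ} {π : V → ℝ}
    (h : IsReversibleChain K π) (d : ℕ) :
    (K - Matrix.of fun _ v => π v) ^ (d + 1) = K ^ (d + 1) - Matrix.of fun _ v => π v := by
  induction d with
  | zero => simp
  | succ d ih =>
    have e1 : K ^ (d + 1) * (Matrix.of fun _ v => π v) = Matrix.of fun _ v => π v := by
      ext a b
      simp [Matrix.mul_apply, ← Finset.sum_mul, (h.pow _).row_sum]
    have e2 : (Matrix.of fun _ v => π v : Matrix V V ℝ) * K = Matrix.of fun _ v => π v := by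
      ext a b
      simp [Matrix.mul_apply, h.stationary]
    have e3 : (Matrix.of fun _ v => π v : Matrix V V ℝ) * (Matrix.of fun _ v => π v)
        = Matrix.of fun _ v => π v := by
      ext a b
      simp [Matrix.mul_apply, ← Finset.sum_mul, h.pi_sum]
    rw [pow_succ, ih, sub_mul, mul_sub, mul_sub, e1, e2, e3, ← pow_succ]
    abel

lemma diagonal_gpi_mul_gK {A : Matrix V V ℝ} (hrow : ∀ u, 0 < ∑ v, A u v) :
    Matrix.diagonal (gpi A) * gK A = (gm A)⁻¹ • A := by
  ext a b
  have ha : gdeg A a ≠ 0 := (hrow a).ne'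
  simp only [Matrix.diagonal_mul, gK, Matrix.of_apply, gpi, Matrix.smul_apply, smul_eq_mul]
  field_simp

end Bounds

/-! ### The spectral bound -/

theorem sa_maxcut_spectral {V : Type*} [Fintype V] [DecidableEq V] [Nonempty V]
    (A : Matrix V V ℝ) (hA : A.IsSymm) (hA0 : ∀ u v, 0 ≤ A u v)
    (hrow : ∀ u, 0 < ∑ v, A u v)
    (l k : ℕ) (hl : 1 ≤ l) (hk : 3 ^ l ≤ k)
    (ρ : ℝ) (hρ : 0 ≤ ρ)
    (hop : l2opNorm ((gK A - Matrix.of fun _ v => gpi A v) ^ (2 * l)) ≤ ρ ^ (2 * l)) :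
    letI β : ℝ := ((k : ℝ) * (Real.sqrt (gpiStar A))⁻¹
        / (2 * (k : ℝ) ^ ((1 : ℝ) / (2 * (l : ℝ))))) * ρ ^ (2 * l)
      + 2 / (k : ℝ) ^ ((1 : ℝ) / (2 * (l : ℝ)))
    IsLocalPSDSum (2 * (k * l + 1))
      (β • Matrix.diagonal (gpi A) + (gm A)⁻¹ • A) := by
  obtain ⟨n, rfl⟩ : ∃ n, l = n + 1 := ⟨l - 1, by omega⟩
  have hch := randomWalk_isReversibleChain hA hA0 hrow
  have hkn : 0 < k := lt_of_lt_of_le (by positivity) hk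
  have hk0 : (0 : ℝ) < k := by exact_mod_cast hkn
  set τ : ℝ := (k : ℝ) ^ ((1 : ℝ) / (2 * ((n + 1 : ℕ) : ℝ))) with hτdef
  have hτ : 0 < τ := Real.rpow_pos_of_pos hk0 _
  have hτk : τ ^ (2 * (n + 1)) = k := by
    have := Real.rpow_inv_natCast_pow hk0.le (n := 2 * (n + 1)) (by omega)
    rw [hτdef, one_div]
    push_cast at this ⊢
    exact this
  have ht : 3 ≤ τ ^ 2 := by
    refine le_of_pow_le_pow_left₀ (n := n + 1) (by omega) (by positivity) ?_
    rw [← pow_mul, hτk]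
    exact_mod_cast hk
  set π := gpi A
  set P := Matrix.diagonal π
  set s : ℝ := (√(gpiStar A))⁻¹ with hs
  set B : ℝ := ρ ^ (2 * (n + 1)) with hB
  have hs0 : 0 ≤ s := by positivity
  have hB0 : 0 ≤ B := by positivity
  have hcert := hch.certificate hτ ht hτk
  -- The remainder `-(K')^{2l}` is controlled by diagonal dominance.
  have hpow : P * (gK A - Matrix.of fun _ v => π v) ^ (2 * (n + 1))
      = P * gK A ^ (2 * (n + 1)) - Matrix.vecMulVec π π := by
    rw [show 2 * (n + 1) = (2 * n + 1) + 1 by ring, hch.sub_stationary_pow, mul_sub]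
    congr 1
    ext a b
    simp [P, Matrix.diagonal_mul, Matrix.vecMulVec_apply]
  have hdd : IsLocalPSDSum (2 * (k * (n + 1) + 1)) (Matrix.diagonal (fun a => s * B * π a)
      + -(P * (gK A - Matrix.of fun _ v => π v) ^ (2 * (n + 1)))) := by
    refine IsLocalPSDSum.of_diag_dominant (by omega) ?_ fun a => ?_
    · rw [hpow]
      ext a b
      simp only [Matrix.transpose_apply, Matrix.neg_apply, Matrix.sub_apply, P,
        Matrix.diagonal_mul, Matrix.vecMulVec_apply]
      rw [(hch.pow _).rev, mul_comm (π b) (π a)]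
    · simp only [Matrix.neg_apply, abs_neg, P, Matrix.diagonal_mul, abs_mul,
        abs_of_nonneg (hch.pi_nonneg a)]
      rw [← Finset.mul_sum, mul_comm]
      refine mul_le_mul_of_nonneg_right ?_ (hch.pi_nonneg a)
      calc _ ≤ _ := row_abs_sum_le _ a
        _ ≤ B * s := mul_le_mul hop (sqrt_card_le hrow) (Real.sqrt_nonneg _) hB0
        _ = s * B := mul_comm _ _
  have hdiag : IsLocalPSDSum (2 * (k * (n + 1) + 1)) P :=
    IsLocalPSDSum.diagonal (by omega) hch.pi_nonneg
  have hn1 : (0 : ℝ) < n + 1 := by positivity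
  have hfin := ((hcert.smul (c := 1 / (2 * (n + 1) * τ)) (by positivity)).add
    (hdd.smul (c := k / (2 * (n + 1) * τ)) (by positivity))).add
    (hdiag.smul (c := k * s * B / (2 * τ) * (n / (n + 1))) (by positivity))
  convert hfin using 1
  have hD : Matrix.diagonal (fun a => s * B * π a) = (s * B) • P := by
    ext a b
    simp [P, Matrix.diagonal_apply]
  rw [hpow, hD, ← diagonal_gpi_mul_gK hrow]
  match_scalars <;> field_simp <;> ring
end

section
/- Let k ≥ 1 be an integer and let X ∈ ℝ^{(k+1)×(k+1)} be a symmetric positive semidefinite matrix with rows and columns indexed by {0, 1, …, k} (index 0 playing the role of the root of a star and indices 1, …, k its children). Suppose X_{ii} = 1 for all i, and X_{ij} = 0 for all distinct i, j ∈ {1, …, k}. Then the average of the root–child entries satisfies (1/k)·Σ_{i=1}^{k} X_{0i} ≥ −1/√k. -/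
/-!
Test positive semidefiniteness on the vector `c = (√k, 1, …, 1)`. The children are pairwise
orthogonal unit vectors in the Gram picture, so `cᵀXc = 2k + 2√k · S` where `S` is the sum of the
root–child entries. Hence `S ≥ -√k`, and dividing by `k` gives the bound.
-/

theorem star_psd_bound (k : ℕ) (hk : 1 ≤ k)
    (X : Matrix (Fin (k + 1)) (Fin (k + 1)) ℝ) (hX : X.PosSemidef)
    (hdiag : ∀ i, X i i = 1)
    (hoffdiag : ∀ i j : Fin (k + 1), i ≠ 0 → j ≠ 0 → i ≠ j → X i j = 0) :
    -(1 / Real.sqrt k) ≤ (1 / (k : ℝ)) * ∑ i : Fin k, X 0 i.succ := by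
  have hk0 : (0 : ℝ) < k := by exact_mod_cast hk
  have hs : 0 < Real.sqrt k := Real.sqrt_pos.mpr hk0
  have hss : Real.sqrt k * Real.sqrt k = k := Real.mul_self_sqrt hk0.le
  have hsym : ∀ i : Fin k, X i.succ 0 = X 0 i.succ := fun i => by
    simpa using hX.1.apply 0 i.succ
  have hchild : ∀ i j : Fin k, X i.succ j.succ = if i = j then 1 else 0 := by
    intro i j
    split_ifs with h
    · rw [h, hdiag]
    · exact hoffdiag _ _ (Fin.succ_ne_zero i) (Fin.succ_ne_zero j)
        (fun e => h (Fin.succ_injective _ e))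
  have hq := hX.dotProduct_mulVec_nonneg (Fin.cons (Real.sqrt k) (fun _ => 1))
  simp only [dotProduct, Matrix.mulVec, Fin.sum_univ_succ, Pi.star_apply, Fin.cons_zero,
    Fin.cons_succ, star_trivial, hdiag, hsym, hchild, mul_one, one_mul,
    Finset.sum_add_distrib, Finset.sum_ite_eq, Finset.mem_univ, if_true,
    Finset.sum_const, Finset.card_univ, Fintype.card_fin, nsmul_eq_mul,
    ← Finset.sum_mul] at hq
  set S := ∑ i : Fin k, X 0 i.succ
  have hS : -Real.sqrt k ≤ S := by
    by_contra! h
    nlinarith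
  calc -(1 / Real.sqrt k) = 1 / (k : ℝ) * -Real.sqrt k := by
        rw [← hss]
        field_simp
        simp
    _ ≤ 1 / (k : ℝ) * S := by gcongr
end

section
/- Let T be a finite tree with vertex set T, fix a root r ∈ T, and for φ : T → V define the weight w_r(φ) = π(φ(r)) · Π_{j ∈ T, j ≠ r} K_{φ(p_r(j)), φ(j)}, where p_r(j) is the neighbor of j on the path from j to r in T. Then for any two vertices i, j ∈ T at tree-distance d and any functions f, g : V → ℝ, Σ_{φ : T → V} w_r(φ) · ( Π_{(a,b)} Ξ_{φ(a),φ(b)} ) · f(φ(i)) · g(φ(j)) = ⟨f, K̄^d g⟩_π, where the inner product Π_{(a,b)} runs over the d edges (a,b) of the unique path from i to j in T. (This is the path-marginal identity for the signed stationary T-indexed random walk: the sign σ(i)σ(j) telescopes to the product of edge signs along the path.) -/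
/-!
The weight `w_r(φ)` does not depend on the root: by reversibility it equals
`m⁻¹ ∏_v deg(φ v) ∏_{ab edge} A(φ a, φ b) / (deg(φ a) deg(φ b))`, because `j ↦ {p_r(j), j}` is a
bijection from the non-root vertices onto the edges of the tree (`prod_parent_eq_prod_edges`,
`treeWalkWeight_root_indep`). One may therefore root the tree at `i`; then `p_i` maps every vertex
of the path `q` to the preceding one (`parent_getVert`).

With this root, all vertices off the path are summed out, deepest first, each contributing a row
sum of `K`, which is `1` (`sum_out_off_set`). The remaining sum runs along the path, and summing
out its vertices from the end `j` towards `i` applies `K̄` to `g` once per edge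
(`sum_along_sequence`).

To avoid changing the index type when a coordinate is summed out, all sums stay over `T → V`; each
summed-out coordinate then accounts for a factor `|V|`, and these factors cancel at the end.
-/

open Matrix

/-- The weight of a map `φ : T → V` in the stationary `T`-indexed random walk rooted at
`r`: `w_r(φ) = π(φ(r)) ⬝ ∏_{j ≠ r} K_{φ(p_r(j)), φ(j)}`, where `p r j` is the parent of
`j` with respect to the root `r`. -/
noncomputable def treeWalkWeight {V T : Type*} [Fintype V] [Nonempty V] [Fintype T]
    [DecidableEq T] (A : Matrix V V ℝ) (p : T → T → T) (r : T) (φ : T → V) : ℝ :=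
  gpi A (φ r) * ∏ j ∈ Finset.univ.erase r, gK A (φ (p r j)) (φ j)

/-! ### Summing out coordinates -/

section SummingOut

variable {V T : Type*} [Fintype V] [Fintype T] [DecidableEq T]

lemma sum_sum_update (k : T) (H : (T → V) → ℝ) :
    ∑ φ : T → V, ∑ x : V, H (Function.update φ k x) = (Fintype.card V : ℝ) * ∑ φ : T → V, H φ := by
  -- `(φ, x) ↦ (φ[k := x], φ k)` is an involution of `(T → V) × V`.
  have hinv : Function.Involutive
      (fun a : (T → V) × V => (Function.update a.1 k a.2, a.1 k)) := by
    rintro ⟨φ, x⟩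
    simp
  calc ∑ φ : T → V, ∑ x : V, H (Function.update φ k x)
      = ∑ a : (T → V) × V, H (Function.update a.1 k a.2) := by
        rw [Fintype.sum_prod_type]
    _ = ∑ a : (T → V) × V, H a.1 :=
        Fintype.sum_equiv hinv.toPerm _ _ (fun a => rfl)
    _ = (Fintype.card V : ℝ) * ∑ φ : T → V, H φ := by
        rw [Fintype.sum_prod_type, Finset.mul_sum]
        simp

/-- Summing out the coordinate `k`, on which the factor `G` does not depend. -/
lemma card_mul_sum_eq (k : T) (G L : (T → V) → ℝ)
    (hG : ∀ φ x, G (Function.update φ k x) = G φ) :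
    (Fintype.card V : ℝ) * ∑ φ : T → V, G φ * L φ
      = ∑ φ : T → V, G φ * ∑ x : V, L (Function.update φ k x) := by
  rw [← sum_sum_update k (fun φ => G φ * L φ)]
  simp only [hG, Finset.mul_sum]

/-- All coordinates outside `S` can be summed out against a stochastic kernel `K` along a parent
map `P` that decreases the depth `dep`. -/
lemma sum_out_off_set (K : Matrix V V ℝ) (hK : ∀ u, ∑ v, K u v = 1) (P : T → T) (dep : T → ℕ)
    (r : T) (hP : ∀ j, j ≠ r → dep (P j) < dep j) (n : ℕ) :
    ∀ (S : Finset T), Sᶜ.card = n → r ∈ S → ∀ F : (T → V) → ℝ,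
      (∀ φ ψ, (∀ j ∈ S, φ j = ψ j) → F φ = F ψ) →
      (Fintype.card V : ℝ) ^ n * ∑ φ : T → V, F φ * ∏ j ∈ Sᶜ, K (φ (P j)) (φ j)
        = ∑ φ : T → V, F φ := by
  induction n with
  | zero =>
    intro S hS _ F _
    rw [Finset.card_eq_zero] at hS
    simp [hS]
  | succ n ih =>
    intro S hS hr F hF
    -- A vertex `k` of least depth outside `S` has its parent in `S`.
    obtain ⟨k, hk, hmin⟩ := Finset.exists_min_image Sᶜ dep
      (Finset.card_pos.mp (by omega))
    have hkS : k ∉ S := Finset.mem_compl.mp hk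
    have hkr : k ≠ r := fun h => hkS (h ▸ hr)
    have hPk : P k ∈ S := by
      by_contra h
      have h1 := hmin _ (Finset.mem_compl.mpr h)
      have h2 := hP k hkr
      omega
    have hPkk : P k ≠ k := fun h => hkS (h ▸ hPk)
    have hcompl : (insert k S)ᶜ = Sᶜ.erase k := Finset.compl_insert
    have hih := ih (insert k S) (by rw [hcompl, Finset.card_erase_of_mem hk]; omega)
      (Finset.mem_insert_of_mem hr) (fun φ => F φ * K (φ (P k)) (φ k)) (by
        intro φ ψ h
        rw [hF φ ψ (fun j hj => h j (Finset.mem_insert_of_mem hj)),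
          h k (Finset.mem_insert_self _ _), h (P k) (Finset.mem_insert_of_mem hPk)])
    have hsplit : ∀ φ : T → V, F φ * ∏ j ∈ Sᶜ, K (φ (P j)) (φ j)
        = F φ * K (φ (P k)) (φ k) * ∏ j ∈ (insert k S)ᶜ, K (φ (P j)) (φ j) := by
      intro φ
      rw [hcompl, mul_assoc, Finset.mul_prod_erase Sᶜ (fun j => K (φ (P j)) (φ j)) hk]
    simp only [hsplit]
    rw [pow_succ', mul_assoc, hih, card_mul_sum_eq k F (fun φ => K (φ (P k)) (φ k))]
    · refine Finset.sum_congr rfl fun φ _ => ?_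
      simp [Function.update_of_ne hPkk, hK]
    · intro φ x
      refine hF _ _ fun j hj => Function.update_of_ne ?_ _ _
      rintro rfl
      exact hkS hj

/-- Summing out a sequence of distinct coordinates `s n, …, s 1` applies the kernel `M` to `g`
once for each of them. -/
lemma sum_along_sequence [DecidableEq V] (M : Matrix V V ℝ) (s : ℕ → T) (h : V → ℝ) (n : ℕ)
    (hs : Set.InjOn s {t | t ≤ n}) :
    ∀ g : V → ℝ, (Fintype.card V : ℝ) ^ n * ∑ φ : T → V,
        (h (φ (s 0)) * ∏ t ∈ Finset.range n, M (φ (s t)) (φ (s (t + 1)))) * g (φ (s n))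
      = ∑ φ : T → V, h (φ (s 0)) * ((M ^ n) *ᵥ g) (φ (s 0)) := by
  induction n with
  | zero => intro g; simp
  | succ n ih =>
    intro g
    have hne : ∀ t, t ≤ n → s t ≠ s (n + 1) := by
      intro t ht he
      have := hs (show t ≤ n + 1 by omega) (show n + 1 ≤ n + 1 by omega) he
      omega
    have hih := ih (hs.mono fun t (ht : t ≤ n) => show t ≤ n + 1 by omega) (M *ᵥ g)
    rw [pow_succ M, ← Matrix.mulVec_mulVec, ← hih, pow_succ, mul_assoc]
    congr 1
    have hsplit : ∀ φ : T → V,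
        (h (φ (s 0)) * ∏ t ∈ Finset.range (n + 1), M (φ (s t)) (φ (s (t + 1)))) * g (φ (s (n + 1)))
        = (h (φ (s 0)) * ∏ t ∈ Finset.range n, M (φ (s t)) (φ (s (t + 1))))
          * (M (φ (s n)) (φ (s (n + 1))) * g (φ (s (n + 1)))) := by
      intro φ
      rw [Finset.prod_range_succ]
      ring
    simp only [hsplit]
    rw [card_mul_sum_eq (s (n + 1))
      (fun φ => h (φ (s 0)) * ∏ t ∈ Finset.range n, M (φ (s t)) (φ (s (t + 1))))
      (fun φ => M (φ (s n)) (φ (s (n + 1))) * g (φ (s (n + 1))))]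
    · refine Finset.sum_congr rfl fun φ _ => ?_
      simp [Function.update_of_ne (hne n le_rfl), Matrix.mulVec, dotProduct]
    · intro φ x
      rw [Function.update_of_ne (hne 0 (Nat.zero_le _))]
      congr 1
      refine Finset.prod_congr rfl fun t ht => ?_
      have ht' := Finset.mem_range.mp ht
      rw [Function.update_of_ne (hne t ht'.le), Function.update_of_ne (hne (t + 1) ht')]

lemma sum_eval_coordinate (i : T) (h : V → ℝ) :
    ∑ φ : T → V, h (φ i) = (Fintype.card V : ℝ) ^ (Fintype.card T - 1) * ∑ u, h u := by
  rw [← (Equiv.funSplitAt i V).symm.sum_comp, Fintype.sum_prod_type, Finset.mul_sum]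
  simp [Equiv.funSplitAt, Equiv.piSplitAt]

end SummingOut

/-! ### Parent maps in trees -/

section Parents

variable {T : Type*} [Fintype T] [DecidableEq T] {G : SimpleGraph T}

/-- In a tree, `j ↦ {P j, j}` is a bijection from the non-root vertices onto the edges: it is
injective because `P` lowers the distance to the root, and both sides have `|T| - 1` elements. -/
lemma parent_edges [Fintype G.edgeSet] (hG : G.IsTree) {r : T} {P : T → T}
    (hP : ∀ j, j ≠ r → G.Adj (P j) j ∧ G.dist r (P j) + 1 = G.dist r j) :
    Set.InjOn (fun j => s(P j, j)) (Finset.univ.erase r : Finset T) ∧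
      (Finset.univ.erase r).image (fun j => s(P j, j)) = G.edgeFinset := by
  have hinj : Set.InjOn (fun j => s(P j, j)) (Finset.univ.erase r : Finset T) := by
    intro j hj k hk hjk
    have hj' := (hP j (Finset.ne_of_mem_erase hj)).2
    have hk' := (hP k (Finset.ne_of_mem_erase hk)).2
    rcases Sym2.eq_iff.mp hjk with ⟨_, h⟩ | ⟨h1, h2⟩
    · exact h
    · rw [h1] at hj'
      rw [← h2] at hk'
      omega
  refine ⟨hinj, Finset.eq_of_subset_of_card_le ?_ ?_⟩
  · intro e he
    obtain ⟨j, hj, rfl⟩ := Finset.mem_image.mp he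
    simpa using (hP j (Finset.ne_of_mem_erase hj)).1
  · rw [Finset.card_image_of_injOn hinj, Finset.card_erase_of_mem (Finset.mem_univ r),
      Finset.card_univ]
    have := hG.card_edgeFinset
    omega

lemma prod_parent_eq_prod_edges [Fintype G.edgeSet] (hG : G.IsTree) {r : T} {P : T → T}
    (hP : ∀ j, j ≠ r → G.Adj (P j) j ∧ G.dist r (P j) + 1 = G.dist r j) (B : Sym2 T → ℝ) :
    ∏ j ∈ Finset.univ.erase r, B s(P j, j) = ∏ e ∈ G.edgeFinset, B e := by
  obtain ⟨hinj, himg⟩ := parent_edges hG hP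
  rw [← himg, Finset.prod_image hinj]

lemma parent_getVert (hG : G.IsTree) {i j : T} {P : T → T}
    (hP : ∀ k, k ≠ i → G.Adj (P k) k ∧ G.dist i (P k) + 1 = G.dist i k)
    (q : G.Walk i j) (hq : q.IsPath) (t : ℕ) (ht : t < q.length) :
    P (q.getVert (t + 1)) = q.getVert t := by
  classical
  induction t with
  | zero =>
    have he : s(q.getVert 0, q.getVert 1) ∈ G.edgeFinset := by
      simpa using q.adj_getVert_succ ht
    rw [← (parent_edges hG hP).2] at he
    obtain ⟨k, hk, hke⟩ := Finset.mem_image.mp he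
    rcases Sym2.eq_iff.mp hke with ⟨h1, h2⟩ | ⟨_, h2⟩
    · rw [← h1, h2]
    · exact absurd (h2.trans q.getVert_zero) (Finset.ne_of_mem_erase hk)
  | succ t ih =>
    have he : s(q.getVert (t + 1), q.getVert (t + 1 + 1)) ∈ G.edgeFinset := by
      simpa using q.adj_getVert_succ ht
    rw [← (parent_edges hG hP).2] at he
    obtain ⟨k, _, hke⟩ := Finset.mem_image.mp he
    rcases Sym2.eq_iff.mp hke with ⟨h1, h2⟩ | ⟨h1, h2⟩
    · rw [← h1, h2]
    · -- Here the parent of `q (t + 1)` would be both `q t` and `q (t + 2)`.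
      rw [h2, ih (by omega)] at h1
      have := hq.getVert_injOn (show t ≤ q.length by omega)
        (show t + 1 + 1 ≤ q.length by omega) h1
      omega

end Parents

/-! ### Independence of the root -/

section Weight

variable {V T : Type*} [Fintype V] [Nonempty V] [Fintype T] [DecidableEq T]

/-- Reversibility of the walk: the weight does not depend on the root. -/
lemma treeWalkWeight_root_indep (A : Matrix V V ℝ) (hA : A.IsSymm)
    (hd : ∀ u, gdeg A u ≠ 0) {G : SimpleGraph T} (hG : G.IsTree) (p : T → T → T)
    (hp : ∀ r j, j ≠ r → G.Adj (p r j) j ∧ G.dist r (p r j) + 1 = G.dist r j)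
    (r r' : T) (φ : T → V) : treeWalkWeight A p r φ = treeWalkWeight A p r' φ := by
  classical
  -- The symmetric edge weight `A_{ab} / (deg a · deg b)`.
  let B : Sym2 T → ℝ := Sym2.lift ⟨fun a b =>
    A (φ a) (φ b) / (gdeg A (φ a) * gdeg A (φ b)), fun a b => by
      show A (φ a) (φ b) / (gdeg A (φ a) * gdeg A (φ b))
        = A (φ b) (φ a) / (gdeg A (φ b) * gdeg A (φ a))
      rw [hA.apply (φ a) (φ b), mul_comm]⟩
  have key : ∀ s : T, treeWalkWeight A p s φ
      = (gm A)⁻¹ * (∏ v, gdeg A (φ v)) * ∏ e ∈ G.edgeFinset, B e := by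
    intro s
    have hfac : ∀ j, gK A (φ (p s j)) (φ j) = gdeg A (φ j) * B s(p s j, j) := by
      intro j
      have h1 := hd (φ j)
      have h2 := hd (φ (p s j))
      simp only [gK, Matrix.of_apply, B, Sym2.lift_mk]
      field_simp
    rw [← prod_parent_eq_prod_edges hG (hp s) B, treeWalkWeight, gpi]
    simp only [hfac]
    rw [Finset.prod_mul_distrib,
      ← Finset.mul_prod_erase Finset.univ (fun v => gdeg A (φ v)) (Finset.mem_univ s)]
    ring
  rw [key r, key r']

end Weight

theorem signed_tree_indexed_walk_marginals {V T : Type*} [Fintype V] [DecidableEq V]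
    [Nonempty V] [Fintype T] [DecidableEq T]
    (A : Matrix V V ℝ) (hA : A.IsSymm) (hA0 : ∀ u v, 0 ≤ A u v)
    (hrow : ∀ u, 0 < ∑ v, A u v)
    (Ξ : Matrix V V ℝ) (hΞsym : Ξ.IsSymm) (hΞ : ∀ u v, Ξ u v = 1 ∨ Ξ u v = -1)
    (G : SimpleGraph T) (hG : G.IsTree)
    (p : T → T → T)
    (hp : ∀ r j, j ≠ r → G.Adj (p r j) j ∧ G.dist r (p r j) + 1 = G.dist r j)
    (r i j : T) (q : G.Walk i j) (hq : q.IsPath) (f g : V → ℝ) :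
    ∑ φ : T → V, treeWalkWeight A p r φ
        * (∏ t ∈ Finset.range q.length, Ξ (φ (q.getVert t)) (φ (q.getVert (t + 1))))
        * f (φ i) * g (φ j)
      = ∑ u, gpi A u * f u * ((Matrix.hadamard Ξ (gK A) ^ q.length) *ᵥ g) u := by
  classical
  have hd : ∀ u, gdeg A u ≠ 0 := fun u => (hrow u).ne'
  have hK : ∀ u, ∑ v, gK A u v = 1 := by
    intro u
    simp only [gK, Matrix.of_apply]
    rw [← Finset.sum_div]
    exact div_self (hd u)
  have hinj := hq.getVert_injOn
  -- The vertices of the path other than the root `i`.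
  set Q : Finset T := (Finset.range q.length).image (fun t => q.getVert (t + 1)) with hQ
  have hQinj : Set.InjOn (fun t => q.getVert (t + 1)) (Finset.range q.length : Finset ℕ) := by
    intro a ha b hb hab
    have ha' := Finset.mem_range.mp ha
    have hb' := Finset.mem_range.mp hb
    have := hinj (show a + 1 ≤ q.length by omega) (show b + 1 ≤ q.length by omega) hab
    omega
  have hiQ : i ∉ Q := by
    intro h
    obtain ⟨t, ht, hti⟩ := Finset.mem_image.mp h
    have ht' := Finset.mem_range.mp ht
    have := hinj (show t + 1 ≤ q.length by omega) (show 0 ≤ q.length by omega)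
      (hti.trans q.getVert_zero.symm)
    omega
  have hmem : ∀ t, t ≤ q.length → q.getVert t ∈ insert i Q := by
    intro t ht
    rcases t with _ | t
    · simp
    · exact Finset.mem_insert_of_mem
        (Finset.mem_image.mpr ⟨t, Finset.mem_range.mpr (by omega), rfl⟩)
  have hcard : (insert i Q).card = q.length + 1 := by
    rw [Finset.card_insert_of_notMem hiQ, hQ, Finset.card_image_of_injOn hQinj, Finset.card_range]
  have hcardT : (insert i Q)ᶜ.card + q.length = Fintype.card T - 1 := by
    have := Finset.card_add_card_compl (insert i Q)
    omega
  have hprod : ∀ φ : T → V, ∏ k ∈ Finset.univ.erase i, gK A (φ (p i k)) (φ k)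
      = (∏ t ∈ Finset.range q.length, gK A (φ (q.getVert t)) (φ (q.getVert (t + 1))))
        * ∏ k ∈ (insert i Q)ᶜ, gK A (φ (p i k)) (φ k) := by
    intro φ
    have hun : Finset.univ.erase i = Q ∪ (insert i Q)ᶜ := by
      ext k
      simp only [Finset.mem_erase, Finset.mem_univ, Finset.mem_union, Finset.mem_compl,
        Finset.mem_insert]
      by_cases hk : k = i
      · subst hk; simp [hiQ]
      · simp [hk, em]
    have hdis : Disjoint Q (insert i Q)ᶜ :=
      Finset.disjoint_left.mpr fun k hk hk' =>
        Finset.mem_compl.mp hk' (Finset.mem_insert_of_mem hk)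
    rw [hun, Finset.prod_union hdis]
    congr 1
    rw [hQ, Finset.prod_image hQinj]
    refine Finset.prod_congr rfl fun t ht => ?_
    rw [parent_getVert hG (hp i) q hq t (Finset.mem_range.mp ht)]
  set M := Matrix.hadamard Ξ (gK A) with hM
  have hterm : ∀ φ : T → V, treeWalkWeight A p r φ
        * (∏ t ∈ Finset.range q.length, Ξ (φ (q.getVert t)) (φ (q.getVert (t + 1))))
        * f (φ i) * g (φ j)
      = (((fun u => gpi A u * f u) (φ (q.getVert 0)) *
          ∏ t ∈ Finset.range q.length, M (φ (q.getVert t)) (φ (q.getVert (t + 1))))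
          * g (φ (q.getVert q.length)))
        * ∏ k ∈ (insert i Q)ᶜ, gK A (φ (p i k)) (φ k) := by
    intro φ
    rw [treeWalkWeight_root_indep A hA hd hG p hp r i, treeWalkWeight, hprod,
      q.getVert_zero, q.getVert_length]
    simp only [hM, Matrix.hadamard_apply, Finset.prod_mul_distrib]
    ring
  simp only [hterm]
  have h1 := sum_out_off_set (gK A) hK (p i) (G.dist i) i
    (fun k hk => by have := (hp i k hk).2; omega) _ (insert i Q) rfl
    (Finset.mem_insert_self _ _)
    (fun φ => ((fun u => gpi A u * f u) (φ (q.getVert 0)) *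
          ∏ t ∈ Finset.range q.length, M (φ (q.getVert t)) (φ (q.getVert (t + 1))))
          * g (φ (q.getVert q.length))) (by
      intro φ ψ h
      simp only
      rw [h _ (hmem 0 (Nat.zero_le _)), h _ (hmem _ le_rfl)]
      congr 2
      refine Finset.prod_congr rfl fun t ht => ?_
      have ht' := Finset.mem_range.mp ht
      rw [h _ (hmem t ht'.le), h _ (hmem (t + 1) ht')])
  have h2 := sum_along_sequence M q.getVert (fun u => gpi A u * f u) q.length hinj g
  have h3 := sum_eval_coordinate (V := V) i (fun u => gpi A u * f u * ((M ^ q.length) *ᵥ g) u)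
  rw [← h1, q.getVert_zero, h3, ← mul_assoc, ← pow_add, add_comm q.length, hcardT] at h2
  have hV : (Fintype.card V : ℝ) ^ (Fintype.card T - 1) ≠ 0 :=
    pow_ne_zero _ (Nat.cast_ne_zero.mpr Fintype.card_ne_zero)
  rw [q.getVert_zero]
  exact mul_left_cancel₀ hV h2
end

section
/- Let T be a finite tree with vertex set T and let f : V → ℝ be any function. Then the symmetric matrix Y ∈ ℝ^{T×T} defined by Y_{ij} = ⟨f, K̄^{dist_T(i,j)} f⟩_π (where dist_T is the graph distance in the tree T, and K̄^0 is the identity) is positive semidefinite. In particular, for any positive semidefinite Ψ ∈ ℝ^{T×T}, Σ_{i,j ∈ T} Ψ_{ij} · ⟨f, K̄^{dist_T(i,j)} f⟩_π ≥ 0. -/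
/-!
The signed operator `K̄` is self-adjoint and a contraction for `⟨·,·⟩_π`: self-adjointness is
reversibility `π(u) K(u,v) = A(u,v)/m` together with the symmetry of `Ξ`, and the contraction
property is the Cauchy–Schwarz inequality in each row followed by stationarity of `π`.

For any self-adjoint contraction `L` and any vectors `x i` indexed by the vertices of a finite
tree, `Q_T(x) = ∑ i j, ⟨x i, L ^ dist(i,j) (x j)⟩ ≥ 0` (`tree_form_nonneg`), by induction on the
size of the tree.  If `l` is a leaf with neighbour `p`, then `dist(l,j) = dist(p,j) + 1` for
`j ≠ l`, so replacing `x p` by `x p + L (x l)` absorbs all cross terms: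
`Q_T(x) = Q_{T-l}(x') + ‖x l‖² - ‖L (x l)‖²`.
Taking `x i = c i • f` shows that `Y` is positive semidefinite, and the statement about `Ψ` is the
Schur product theorem, evaluated at the all-ones vector.
-/

open Matrix

/-- Every shortest walk from a leaf starts with the edge to its unique neighbour. -/
lemma dist_leaf {T : Type*} {G : SimpleGraph T} (hG : G.Connected) {l p : T} (hlp : G.Adj l p)
    (huniq : ∀ q, G.Adj l q → q = p) {j : T} (hj : j ≠ l) :
    G.dist l j = G.dist p j + 1 := by
  obtain ⟨w, hw⟩ := hG.exists_walk_length_eq_dist l j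
  obtain ⟨w', hw'⟩ := hG.exists_walk_length_eq_dist p j
  have h1 := SimpleGraph.dist_le (SimpleGraph.Walk.cons hlp w')
  cases w with
  | nil => exact absurd rfl hj
  | cons h q =>
    obtain rfl := huniq _ h
    have h2 := SimpleGraph.dist_le q
    simp only [SimpleGraph.Walk.length_cons] at hw h1
    omega

/-- Connected induced subgraphs of a tree are isometric, because paths in a tree are unique. -/
lemma dist_induce {T : Type*} {G : SimpleGraph T} (hG : G.IsTree) {s : Set T}
    (hs : (G.induce s).Connected) (i j : s) :
    (G.induce s).dist i j = G.dist i j := by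
  obtain ⟨w, hw, hwl⟩ := hs.exists_path_of_dist i j
  obtain ⟨w', hw', hwl'⟩ := hG.1.exists_path_of_dist (i : T) j
  let e : G.induce s ↪g G := SimpleGraph.Embedding.induce s
  have hp : (w.map e.toHom).IsPath :=
    SimpleGraph.Walk.IsPath.map e.injective hw
  have := (hG.existsUnique_path (i : T) j).unique hp hw'
  rw [← hwl, ← hwl', ← this]
  exact (SimpleGraph.Walk.length_map _ _).symm

/-- Positivity of `∑ i j, B (x i) (L ^ dist(i,j) (x j))` on a finite tree for a `B`-self-adjoint
`B`-contraction `L`.  Vector-valued `x` is what makes the leaf-removal induction close, since the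
neighbour of the removed leaf receives `L (x l)`. -/
lemma tree_form_nonneg {E : Type*} [AddCommGroup E] [Module ℝ E]
    (B : E →ₗ[ℝ] E →ₗ[ℝ] ℝ) (L : Module.End ℝ E)
    (hsymm : ∀ x y, B x y = B y x) (hself : ∀ x y, B (L x) y = B x (L y))
    (hpos : ∀ x, 0 ≤ B x x) (hcontr : ∀ x, B (L x) (L x) ≤ B x x) (n : ℕ) :
    ∀ {T : Type*} [Fintype T] (G : SimpleGraph T), G.IsTree → Fintype.card T = n →
      ∀ x : T → E, 0 ≤ ∑ i, ∑ j, B (x i) ((L ^ G.dist i j) (x j)) := by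
  classical
  induction n with
  | zero =>
    intro T _ G hG hn
    have := hG.1.nonempty
    exact absurd hn Fintype.card_ne_zero
  | succ n ih =>
    intro T _ G hG hn x
    rcases subsingleton_or_nontrivial T with hT | hT
    · refine Finset.sum_nonneg fun i _ => Finset.sum_nonneg fun j _ => ?_
      obtain rfl := Subsingleton.elim i j
      simpa using hpos (x i)
    obtain ⟨l, hl⟩ := hG.exists_vert_degree_one_of_nontrivial
    obtain ⟨p, hlp, huniq⟩ := SimpleGraph.degree_eq_one_iff_existsUnique_adj.mp hl
    have hpl : p ≠ l := hlp.ne'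
    let S := {i : T // i ≠ l}
    let H : SimpleGraph S := G.induce ({l}ᶜ : Set T)
    have hHc : H.Connected := hG.1.induce_compl_singleton_of_degree_eq_one hl
    have hHd : ∀ i j : S, H.dist i j = G.dist (i : T) j := fun i j => dist_induce hG hHc i j
    have hcard : Fintype.card S = n := by
      have : Fintype.card S = Fintype.card T - 1 := by
        simp [S]
      omega
    let p' : S := ⟨p, hpl⟩
    have key := ih H ⟨hHc, hG.2.induce _⟩ hcard
      (fun i => x i + if i = p' then L (x l) else 0)
    -- moving one factor of `L` across the form lengthens the distance from `p` to that from `l`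
    have hcross : ∀ j : S, B (L (x l)) ((L ^ G.dist p j) (x j)) =
        B (x l) ((L ^ G.dist l j) (x j)) := by
      intro j
      rw [hself, dist_leaf hG.1 hlp huniq j.2, pow_succ', Module.End.mul_apply]
    have hselfpow : ∀ (k : ℕ) (a b : E), B a ((L ^ k) b) = B b ((L ^ k) a) := by
      intro k
      induction k with
      | zero => intro a b; simpa using hsymm a b
      | succ k ihk =>
        intro a b
        rw [pow_succ', Module.End.mul_apply, ← hself, ihk, ← Module.End.mul_apply, ← pow_succ,
          pow_succ']
    have hcross' : ∀ j : S, B (x j) ((L ^ G.dist (j : T) p) (L (x l))) =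
        B (x l) ((L ^ G.dist l j) (x j)) := by
      intro j
      rw [hselfpow, SimpleGraph.dist_comm, hcross]
    have hflip : ∀ j : S, B (x j) ((L ^ G.dist (j : T) l) (x l)) =
        B (x l) ((L ^ G.dist l j) (x j)) := by
      intro j
      rw [hselfpow, SimpleGraph.dist_comm]
    have hexp : ∑ i : S, ∑ j : S, B (x i + if i = p' then L (x l) else 0)
          ((L ^ H.dist i j) (x j + if j = p' then L (x l) else 0)) =
        ∑ i : S, ∑ j : S, B (x i) ((L ^ G.dist (i : T) j) (x j)) +
          2 * ∑ j : S, B (x l) ((L ^ G.dist l j) (x j)) + B (L (x l)) (L (x l)) := by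
      have h1 : ∀ i j : S, B (x i + if i = p' then L (x l) else 0)
          ((L ^ H.dist i j) (x j + if j = p' then L (x l) else 0)) =
          B (x i) ((L ^ G.dist (i : T) j) (x j)) +
          (if j = p' then B (x i) ((L ^ G.dist (i : T) j) (L (x l))) else 0) +
          (if i = p' then B (L (x l)) ((L ^ G.dist (i : T) j) (x j)) else 0) +
          (if i = p' then if j = p' then B (L (x l)) ((L ^ G.dist (i : T) j) (L (x l))) else 0
            else 0) := by
        intro i j
        rw [hHd]
        split_ifs <;> simp [map_add] <;> ring
      simp only [h1, Finset.sum_add_distrib]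
      have e1 : ∑ i : S, ∑ j : S,
          (if j = p' then B (x i) ((L ^ G.dist (i : T) j) (L (x l))) else 0) =
          ∑ j : S, B (x l) ((L ^ G.dist l j) (x j)) := by
        refine Finset.sum_congr rfl fun i _ => ?_
        rw [Finset.sum_ite_eq' Finset.univ p', if_pos (Finset.mem_univ _)]
        exact hcross' i
      have e2 : ∑ i : S, ∑ j : S,
          (if i = p' then B (L (x l)) ((L ^ G.dist (i : T) j) (x j)) else 0) =
          ∑ j : S, B (x l) ((L ^ G.dist l j) (x j)) := by
        rw [Finset.sum_comm]
        refine Finset.sum_congr rfl fun j _ => ?_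
        rw [Finset.sum_ite_eq' Finset.univ p', if_pos (Finset.mem_univ _)]
        exact hcross j
      have e3 : ∑ i : S, ∑ j : S, (if i = p' then
          if j = p' then B (L (x l)) ((L ^ G.dist (i : T) j) (L (x l))) else 0 else 0) =
          B (L (x l)) (L (x l)) := by
        rw [Finset.sum_eq_single p' (fun i _ hi => by simp [hi]) (by simp)]
        rw [Finset.sum_eq_single p' (fun i _ hi => by simp [hi]) (by simp)]
        simp
      rw [e1, e2, e3]
      ring
    have hsplit : ∑ i, ∑ j, B (x i) ((L ^ G.dist i j) (x j)) =
        ∑ i : S, ∑ j : S, B (x i) ((L ^ G.dist (i : T) j) (x j)) +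
          2 * ∑ j : S, B (x l) ((L ^ G.dist l j) (x j)) + B (x l) (x l) := by
      simp only [Fintype.sum_eq_add_sum_subtype_ne _ l, Finset.sum_add_distrib]
      have : ∑ j : S, B (x j) ((L ^ G.dist (j : T) l) (x l)) =
          ∑ j : S, B (x l) ((L ^ G.dist l j) (x j)) :=
        Finset.sum_congr rfl fun j _ => hflip j
      simp only [S] at this
      rw [this]
      simp [S]
      ring
    rw [hexp] at key
    rw [hsplit]
    linarith [hcontr (x l)]

section Operator

variable {V : Type*} [Fintype V]

/-- The form `⟨f, g⟩_π = ∑ u, π(u) f(u) g(u)` as a bilinear map. -/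
noncomputable def piForm (A : Matrix V V ℝ) : (V → ℝ) →ₗ[ℝ] (V → ℝ) →ₗ[ℝ] ℝ :=
  LinearMap.mk₂ ℝ (fun f g => ∑ u, gpi A u * f u * g u)
    (fun a b c => by simp [mul_add, add_mul, Finset.sum_add_distrib])
    (fun r a b => by simp only [Pi.smul_apply, smul_eq_mul, Finset.mul_sum]; congr! 1; ring)
    (fun a b c => by simp [mul_add, Finset.sum_add_distrib])
    (fun r a b => by simp only [Pi.smul_apply, smul_eq_mul, Finset.mul_sum]; congr! 1; ring)

lemma piForm_apply (A : Matrix V V ℝ) (f g : V → ℝ) :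
    piForm A f g = ∑ u, gpi A u * f u * g u := rfl

lemma gpi_mul_gK (A : Matrix V V ℝ) (hrow : ∀ u, 0 < ∑ v, A u v) (u v : V) :
    gpi A u * gK A u v = A u v / gm A := by
  have : gdeg A u ≠ 0 := (hrow u).ne'
  simp only [gpi, gK, Matrix.of_apply]
  field_simp

lemma gpi_nonneg (A : Matrix V V ℝ) (hrow : ∀ u, 0 < ∑ v, A u v) (u : V) : 0 ≤ gpi A u :=
  div_nonneg (hrow u).le (Finset.sum_nonneg fun u _ => (hrow u).le)

lemma piForm_self_adjoint (A : Matrix V V ℝ) (hA : A.IsSymm) (hrow : ∀ u, 0 < ∑ v, A u v)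
    (Ξ : Matrix V V ℝ) (hΞsym : Ξ.IsSymm) (x y : V → ℝ) :
    piForm A (Matrix.hadamard Ξ (gK A) *ᵥ x) y = piForm A x (Matrix.hadamard Ξ (gK A) *ᵥ y) := by
  simp only [piForm_apply, Matrix.mulVec, dotProduct, Matrix.hadamard_apply, Finset.mul_sum,
    Finset.sum_mul]
  rw [Finset.sum_comm]
  refine Finset.sum_congr rfl fun u _ => Finset.sum_congr rfl fun v _ => ?_
  have h1 := gpi_mul_gK A hrow u v
  have h2 := gpi_mul_gK A hrow v u
  rw [hA.apply u v, ← h1] at h2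
  rw [hΞsym.apply u v]
  linear_combination (Ξ u v * x u * y v) * h2

lemma piForm_contraction (A : Matrix V V ℝ) (hA : A.IsSymm) (hA0 : ∀ u v, 0 ≤ A u v)
    (hrow : ∀ u, 0 < ∑ v, A u v)
    (Ξ : Matrix V V ℝ) (hΞ : ∀ u v, Ξ u v = 1 ∨ Ξ u v = -1) (x : V → ℝ) :
    piForm A (Matrix.hadamard Ξ (gK A) *ᵥ x) (Matrix.hadamard Ξ (gK A) *ᵥ x) ≤ piForm A x x := by
  have hK0 : ∀ u v, 0 ≤ gK A u v := fun u v => div_nonneg (hA0 u v) (hrow u).le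
  have hK1 : ∀ u, ∑ v, gK A u v = 1 := by
    intro u
    simp only [gK, Matrix.of_apply, ← Finset.sum_div]
    exact div_self (hrow u).ne'
  have hcs : ∀ u, ((Matrix.hadamard Ξ (gK A) *ᵥ x) u) ^ 2 ≤ ∑ v, gK A u v * x v ^ 2 := by
    intro u
    have := Finset.sum_sq_le_sum_mul_sum_of_sq_le_mul Finset.univ
      (r := fun v => Ξ u v * gK A u v * x v) (f := fun v => gK A u v)
      (g := fun v => gK A u v * x v ^ 2) (fun v _ => hK0 u v)
      (fun v _ => mul_nonneg (hK0 u v) (sq_nonneg _))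
      (fun v _ => le_of_eq (by rcases hΞ u v with h | h <;> rw [h] <;> ring))
    rw [hK1, one_mul] at this
    exact this
  calc piForm A (Matrix.hadamard Ξ (gK A) *ᵥ x) (Matrix.hadamard Ξ (gK A) *ᵥ x)
      = ∑ u, gpi A u * ((Matrix.hadamard Ξ (gK A) *ᵥ x) u) ^ 2 := by
        rw [piForm_apply]
        exact Finset.sum_congr rfl fun u _ => by ring
    _ ≤ ∑ u, gpi A u * ∑ v, gK A u v * x v ^ 2 :=
        Finset.sum_le_sum fun u _ => mul_le_mul_of_nonneg_left (hcs u) (gpi_nonneg A hrow u)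
    _ = ∑ v, ∑ u, A v u / gm A * x v ^ 2 := by
        simp only [Finset.mul_sum, ← mul_assoc, gpi_mul_gK A hrow]
        rw [Finset.sum_comm]
        exact Finset.sum_congr rfl fun v _ => Finset.sum_congr rfl fun u _ => by
          rw [hA.apply v u]
    _ = piForm A x x := by
        rw [piForm_apply]
        refine Finset.sum_congr rfl fun v _ => ?_
        rw [← Finset.sum_mul, ← Finset.sum_div]
        simp only [gpi, gdeg]
        ring

end Operator

theorem tree_moment_matrix_posSemidef {V T : Type*} [Fintype V] [DecidableEq V]
    [Nonempty V] [Fintype T]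
    (A : Matrix V V ℝ) (hA : A.IsSymm) (hA0 : ∀ u v, 0 ≤ A u v)
    (hrow : ∀ u, 0 < ∑ v, A u v)
    (Ξ : Matrix V V ℝ) (hΞsym : Ξ.IsSymm) (hΞ : ∀ u v, Ξ u v = 1 ∨ Ξ u v = -1)
    (G : SimpleGraph T) (hG : G.IsTree) (f : V → ℝ) :
    letI Y : Matrix T T ℝ := Matrix.of fun i j =>
      ∑ u, gpi A u * f u * ((Matrix.hadamard Ξ (gK A) ^ G.dist i j) *ᵥ f) u
    Y.PosSemidef ∧
    ∀ Ψ : Matrix T T ℝ, Ψ.PosSemidef → 0 ≤ ∑ i, ∑ j, Ψ i j * Y i j := by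
  set M := Matrix.hadamard Ξ (gK A) with hM
  set Y : Matrix T T ℝ := Matrix.of fun i j =>
    ∑ u, gpi A u * f u * ((M ^ G.dist i j) *ᵥ f) u with hYdef
  have hY : ∀ i j, Y i j = piForm A f ((Matrix.toLin' M ^ G.dist i j) f) := by
    intro i j
    rw [← Matrix.toLin'_pow, Matrix.toLin'_apply]
    rfl
  have hsymm : ∀ x y, piForm A x y = piForm A y x := fun x y => by
    simp only [piForm_apply]
    exact Finset.sum_congr rfl fun u _ => by ring
  have hself : ∀ x y, piForm A (Matrix.toLin' M x) y = piForm A x (Matrix.toLin' M y) :=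
    fun x y => piForm_self_adjoint A hA hrow Ξ hΞsym x y
  have hpow : ∀ (k : ℕ) (x y : V → ℝ), piForm A ((Matrix.toLin' M ^ k) x) y =
      piForm A x ((Matrix.toLin' M ^ k) y) := by
    intro k
    induction k with
    | zero => intro x y; rfl
    | succ k ih =>
      intro x y
      rw [pow_succ', Module.End.mul_apply, hself, ih, ← Module.End.mul_apply, ← pow_succ, pow_succ']
  have hpsd : Y.PosSemidef := by
    refine Matrix.posSemidef_iff_dotProduct_mulVec.mpr ⟨?_, fun c => ?_⟩
    · ext i j
      rw [Matrix.conjTranspose_apply, star_trivial, hY, hY, SimpleGraph.dist_comm, hsymm, hpow]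
    · have h := tree_form_nonneg (piForm A) (Matrix.toLin' M) hsymm hself
        (fun x => by
          rw [piForm_apply]
          refine Finset.sum_nonneg fun u _ => ?_
          rw [mul_assoc]
          exact mul_nonneg (gpi_nonneg A hrow u) (mul_self_nonneg _))
        (fun x => piForm_contraction A hA hA0 hrow Ξ hΞ x)
        (Fintype.card T) G hG rfl (fun i => c i • f)
      refine h.trans_eq ?_
      simp only [dotProduct, Matrix.mulVec, Finset.mul_sum, hY, map_smul, LinearMap.smul_apply,
        smul_eq_mul, star_trivial, Pi.star_apply]
      exact Finset.sum_congr rfl fun i _ => Finset.sum_congr rfl fun j _ => by ring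
  refine ⟨hpsd, fun Ψ hΨ => ?_⟩
  have h := (hΨ.hadamard hpsd).dotProduct_mulVec_nonneg (fun _ => 1)
  simpa [dotProduct, Matrix.mulVec, Matrix.hadamard_apply] using h
end
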